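/- Fix a, b > 0 and ψ ∈ L²([0,b)). The set {φ♯ψ : φ ∈ L²([0,a))} ⊆ L²([0,a+b)) is gap-rich with empty exceptional set; equivalently, the map (φ,E) ↦ B(φ♯ψ, E), extended multiplicatively to words, is gap-rich with empty exceptional set: for every E ∈ ℝ, every finite word x over L²([0,a)), and every ε > 0, there exists a word y with d(x♯ψ-word, y♯ψ-word) < ε (each letter of y within ε of the corresponding letter of x in L²) such that the transfer matrix of the concatenated word (with ψ inserted after each letter) at energy E is hyperbolic. -/

import Mathlib

/-!
Overwrite the first letter of a periodic word `x` over `{φ♯ψ}` on `[0, δ)`, `δ ≤ a`, by a constant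
`E - ω²` with `1 ≤ ω ≤ 2`. The letter stays in `{φ♯ψ}`, it moves by less than `ε` once `δ` is small,
and the transfer matrix of the word becomes `R K(ω)`, where `R` is that of the untouched remainder
and `K(ω)` is `freeTransferMatrix δ ω`. Words composed of such modified copies of `x` are still
`ε`-close to `x`, so it suffices to find a hyperbolic product of matrices `R K(ω)` and to see that
hyperbolicity removes `E` from the spectrum of the periodic operator.

*Hyperbolicity.* The entries of `K(ω)` are so independent that `tr (R K(ω))` is not constant in `ω`.
Unless some `R K(ω)` is already hyperbolic, the traces fill an interval inside `[-2, 2]`, so some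
`A = R K(ω)` is conjugate to a rotation by an angle `θ` with `θ / 2π` irrational. By independence
again, some `B = R K(ω')` does not commute with `A`. As a function of `nθ`, `tr (B Aⁿ)` is a
sinusoid whose amplitude exceeds `2` exactly when `tr (A B A⁻¹ B⁻¹) > 2`, which the Fricke identity
turns into `det (A B - B A) < 0`; density of the angles `nθ` then gives `n` with `|tr (B Aⁿ)| > 2`.

*Spectrum.* Let `-g'' + (V - E) g = h` weakly, with `g, h ∈ L²`; then `g` is a genuine solution. The
eigenvectors of a hyperbolic monodromy matrix have real eigenvalues off the unit circle and provide
two Floquet solutions. The Wronskians `z n` of `g` with one of them, sampled once per period, are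
square summable and satisfy `ν z (n + 1) = z n + f n` with `|ν| ≠ 1` and `f` controlled by `h`.
Estimating `z` in `ℓ²` and recovering `g` from its two Wronskians gives `‖g‖ ≤ C ‖h‖`. Since the
weak operator is closed, its range is then closed; it is symmetric on test functions, so the
orthogonal complement of the range consists of weak solutions with `h = 0`, which vanish by the
estimate. Hence the operator has a bounded inverse.
-/

open Set MeasureTheory BoundedContinuousFunction

noncomputable section

/-- `L²(ℝ)`. -/
abbrev L2R := Lp ℝ 2 (volume : Measure ℝ)

/-- `L²([0,a))`. -/
abbrev L2I (a : ℝ) := Lp ℝ 2 (volume.restrict (Ico (0 : ℝ) a))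

/-- `g` and `h` satisfy `(-d²/dx² + (V - E)) g = h` in the distributional sense. -/
def WeakSchrodingerEq (V : ℝ → ℝ) (E : ℝ) (g h : L2R) : Prop :=
  ∀ φ : ℝ → ℝ, ContDiff ℝ (⊤ : ℕ∞) φ → HasCompactSupport φ →
    ∫ x, g x * (-(deriv (deriv φ) x) + (V x - E) * φ x) = ∫ x, h x * φ x

/-- The spectrum of the continuum Schrödinger operator `L_V = -d²/dx² + V` on
`L²(ℝ)`: `E` is in the spectrum iff there is no bounded operator `T` inverting
`L_V - E` (in the distributional sense). -/
def ContSpectrum (V : ℝ → ℝ) : Set ℝ :=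
  {E : ℝ | ¬ ∃ T : L2R →L[ℝ] L2R,
      (∀ f : L2R, WeakSchrodingerEq V E (T f) f) ∧
      (∀ g h : L2R, WeakSchrodingerEq V E g h → T h = g)}

/-- A subset of ℝ is discrete if it has no accumulation points. -/
def IsDiscreteSet (S : Set ℝ) : Prop := ∀ x : ℝ, ¬ AccPt x (Filter.principal S)

/-- Periodic extension `w^{♯ℤ}` of a finite word `w`. -/
def perExt {α : Type*} [Zero α] {m : ℕ} (w : Fin m → α) : ℤ → α :=
  fun n =>
    if h : 0 < m then
      w ⟨(n % (m : ℤ)).toNat, by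
        have h1 : 0 ≤ n % (m : ℤ) := Int.emod_nonneg n (by exact_mod_cast h.ne')
        have h2 : n % (m : ℤ) < (m : ℤ) := Int.emod_lt_of_pos n (by exact_mod_cast h)
        omega⟩
    else 0

/-- Concatenation `y^♮ : ℝ → ℝ` of a bi-infinite sequence of pieces in
`L²([0,a))`: `y^♮(ja + t) = y_j(t)` for `t ∈ [0,a)`. -/
def aggC (a : ℝ) (y : ℤ → L2I a) : ℝ → ℝ :=
  fun t => (y ⌊t / a⌋) (t - (⌊t / a⌋ : ℝ) * a)

/-- `Y ⊆ L²([0,a))` is gap-rich with exceptional set `S`. -/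
def GapRichC (a : ℝ) (Y : Set (L2I a)) (S : Set ℝ) : Prop :=
  IsDiscreteSet S ∧
  ∀ E : ℝ, E ∉ S → ∀ m : ℕ, 0 < m → ∀ x : Fin m → L2I a, (∀ i, x i ∈ Y) →
    ∀ ε : ℝ, 0 < ε →
      ∃ l : ℕ, 0 < l ∧ ∃ y : Fin l → L2I a,
        (∀ i, y i ∈ Y) ∧
        (∀ j : ℤ, dist (perExt x j) (perExt y j) < ε) ∧
        E ∉ ContSpectrum (aggC a (perExt y))

/-- The periodic elements of `Y^ℤ`. -/
def PerC (a : ℝ) (Y : Set (L2I a)) : Set (ℤ →ᵇ L2I a) :=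
  {x | (∃ q : ℕ, 0 < q ∧ ∀ n : ℤ, x (n + q) = x n) ∧ ∀ n : ℤ, x n ∈ Y}

/-- The limit-periodic elements of `Y^ℤ`. -/
def LPC (a : ℝ) (Y : Set (L2I a)) : Set (ℤ →ᵇ L2I a) := closure (PerC a Y)

/-- Cantor set of zero Hausdorff dimension (continuum case: closed, possibly
unbounded). -/
def IsZeroDimCantorC (s : Set ℝ) : Prop :=
  s.Nonempty ∧ IsClosed s ∧ Preperfect s ∧ interior s = ∅ ∧ dimH s = 0

/-- The set of concatenations `{φ♯ψ : φ ∈ L²([0,a))} ⊆ L²([0,a+b))`, described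
by its almost-everywhere values: on `[0,a)` the element agrees with some
`φ ∈ L²([0,a))`, and on `[a,a+b)` it agrees with `ψ(· - a)`. -/
def concatSet (a b : ℝ) (ψ : L2I b) : Set (L2I (a + b)) :=
  {χ | ∃ φ : L2I a,
    (∀ᵐ t ∂(volume.restrict (Ico (0 : ℝ) a)), χ t = φ t) ∧
    (∀ᵐ t ∂(volume.restrict (Ico a (a + b))), χ t = ψ (t - a))}

open Filter Topology Matrix

/-! ### Hyperbolic words in `SL(2, ℝ)` -/

section Elliptic

variable {R : Type*} [CommRing R] {A B C : Matrix (Fin 2) (Fin 2) R}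

/-- Since `tr (A B A⁻¹ B⁻¹) - 2 = -det (A B - B A)` in `SL(2)`, this is the Fricke identity. -/
lemma det_mul_sub_mul_comm (hA : A.det = 1) (hB : B.det = 1) :
    (A * B - B * A).det = 4 + A.trace * B.trace * (A * B).trace
      - A.trace ^ 2 - B.trace ^ 2 - (A * B).trace ^ 2 := by
  simp only [det_fin_two, trace_fin_two, Matrix.mul_apply, Matrix.sub_apply, Fin.sum_univ_two] at *
  grind

variable [LinearOrder R] [IsStrictOrderedRing R]

lemma det_neg_of_isElliptic (hA : A.IsElliptic) (hC : C.trace = 0)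
    (hAC : (A * C).trace = 0) (hne : C ≠ 0) : C.det < 0 := by
  have hc : A 1 0 ≠ 0 := hA.c_ne_zero
  rw [IsElliptic, discr_fin_two, det_fin_two, trace_fin_two] at hA
  simp only [trace_fin_two, Matrix.mul_apply, Fin.sum_univ_two] at hC hAC
  have hC11 : C 1 1 = -C 0 0 := by linear_combination hC
  have hrel : C 0 1 * A 1 0 = -(C 0 0 * (A 0 0 - A 1 1)) - C 1 0 * A 0 1 := by
    linear_combination hAC - A 1 1 * hC
  rw [det_fin_two, hC11]
  have hsq : 4 * A 1 0 ^ 2 * (C 0 0 * -C 0 0 - C 0 1 * C 1 0)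
      = C 1 0 ^ 2 * ((A 0 0 + A 1 1) ^ 2 - 4 * (A 0 0 * A 1 1 - A 0 1 * A 1 0))
        - (2 * A 1 0 * C 0 0 - C 1 0 * (A 0 0 - A 1 1)) ^ 2 := by
    linear_combination (-4 * A 1 0 * C 1 0) * hrel
  refine neg_of_mul_neg_right (a := 4 * A 1 0 ^ 2) ?_ (by positivity)
  rw [hsq]
  rcases eq_or_ne (C 1 0) 0 with hz | hz
  · have hx : C 0 0 ≠ 0 := fun hx => hne <| by
      have hy : C 0 1 = 0 := by simpa [hx, hz, hc] using hrel
      ext i j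
      fin_cases i <;> fin_cases j <;> simp [hx, hy, hz, hC11]
    rw [hz]
    have : 0 < (2 * A 1 0 * C 0 0) ^ 2 := by positivity
    linear_combination this
  · have hz2 : 0 < C 1 0 ^ 2 := by positivity
    linarith [mul_neg_of_pos_of_neg hz2 hA,
      sq_nonneg (2 * A 1 0 * C 0 0 - C 1 0 * (A 0 0 - A 1 1))]

end Elliptic

section Rotation

variable {A B : Matrix (Fin 2) (Fin 2) ℝ} {θ : ℝ}

lemma isHyperbolic_iff_four_lt_trace_sq (hA : A.det = 1) : A.IsHyperbolic ↔ 4 < A.trace ^ 2 := by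
  rw [IsHyperbolic, discr_fin_two, hA, mul_one, sub_pos]

lemma sin_smul_pow_eq (hA : A.det = 1) (htr : A.trace = 2 * Real.cos θ) (n : ℕ) :
    Real.sin θ • A ^ n = Real.sin (n * θ) • A - Real.sin (n * θ - θ) • 1 := by
  have cayley_hamilton : A * A = (2 * Real.cos θ) • A - 1 := by
    have := aeval_self_charpoly A
    simp only [charpoly_fin_two, hA, htr, map_add, map_sub, map_mul, map_pow, Polynomial.aeval_X,
      Polynomial.aeval_C, Algebra.algebraMap_eq_smul_one, smul_mul_assoc, one_mul, one_smul,
      ← sq] at this ⊢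
    rw [← sub_eq_zero, ← this]
    module
  induction n with
  | zero => simp
  | succ n ih =>
    have hsin : Real.sin ((n + 1 : ℕ) * θ)
        = Real.sin (n * θ) * (2 * Real.cos θ) - Real.sin (n * θ - θ) := by
      push_cast
      rw [add_mul, one_mul, Real.sin_add, Real.sin_sub]
      ring
    have hsub : ((n + 1 : ℕ) : ℝ) * θ - θ = n * θ := by push_cast; ring
    rw [pow_succ, ← smul_mul_assoc, ih, sub_mul, smul_mul_assoc, cayley_hamilton, smul_mul_assoc,
      one_mul, hsin, hsub]
    module

lemma exists_nat_lt_sin_add_cos_sq (hθ : Irrational (θ / (2 * Real.pi))) {α β c : ℝ}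
    (hc : c < α ^ 2 + β ^ 2) :
    ∃ n : ℕ, c < (α * Real.sin (n * θ) + β * Real.cos (n * θ)) ^ 2 := by
  have : Fact (0 < 2 * Real.pi) := ⟨Real.two_pi_pos⟩
  have hdense : DenseRange fun n : ℕ => n • (θ : AddCircle (2 * Real.pi)) :=
    denseRange_zsmul_iff_nsmul.1 (AddCircle.denseRange_zsmul_coe_iff.2 hθ)
  let F : Real.Angle → ℝ := fun t => (α * t.sin + β * t.cos) ^ 2
  have hF : Continuous F := by
    have hs := Real.Angle.continuous_sin
    have hc := Real.Angle.continuous_cos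
    fun_prop
  let w : ℂ := ⟨β, α⟩
  have hmax : F w.arg = α ^ 2 + β ^ 2 := by
    have hs : ‖w‖ * Real.sin w.arg = α := w.norm_mul_sin_arg
    have hc : ‖w‖ * Real.cos w.arg = β := w.norm_mul_cos_arg
    simp only [F, Real.Angle.sin_coe, Real.Angle.cos_coe, ← hs, ← hc]
    linear_combination (‖w‖ ^ 2 * (Real.sin w.arg ^ 2 + Real.cos w.arg ^ 2))
      * Real.sin_sq_add_cos_sq w.arg
  obtain ⟨n, hn⟩ := hdense.exists_mem_open (isOpen_lt continuous_const hF)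
    ⟨_, hc.trans_eq hmax.symm⟩
  have hcoe : (n • (θ : AddCircle (2 * Real.pi)) : Real.Angle) = ((n * θ : ℝ) : Real.Angle) := by
    rw [← nsmul_eq_mul]; rfl
  refine ⟨n, ?_⟩
  change c < F _ at hn
  simpa only [F, hcoe, Real.Angle.sin_coe, Real.Angle.cos_coe] using hn

lemma sin_ne_zero_of_irrational (hθ : Irrational (θ / (2 * Real.pi))) : Real.sin θ ≠ 0 := by
  intro h
  obtain ⟨k, rfl⟩ := Real.sin_eq_zero_iff.1 h
  refine hθ ⟨k / 2, ?_⟩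
  push_cast
  field_simp

lemma isElliptic_of_trace_eq (hA : A.det = 1) (hθ : Real.sin θ ≠ 0)
    (htr : A.trace = 2 * Real.cos θ) : A.IsElliptic := by
  have hsin2 : 0 < Real.sin θ ^ 2 := by positivity
  rw [IsElliptic, discr_fin_two, hA, htr]
  linarith [Real.sin_sq_add_cos_sq θ]

theorem exists_isHyperbolic_mul_pow (hA : A.det = 1) (hB : B.det = 1) (hAB : A * B ≠ B * A)
    (hθ : Irrational (θ / (2 * Real.pi))) (htr : A.trace = 2 * Real.cos θ) :
    ∃ n : ℕ, (B * A ^ n).IsHyperbolic := by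
  have hsin := sin_ne_zero_of_irrational hθ
  have hdet : (A * B - B * A).det < 0 :=
    det_neg_of_isElliptic (isElliptic_of_trace_eq hA hsin htr)
      (by rw [trace_sub, trace_mul_comm A B, sub_self])
      (by rw [mul_sub, trace_sub, trace_mul_comm A (B * A), ← mul_assoc, trace_mul_comm,
        ← mul_assoc, sub_self]) (sub_ne_zero.2 hAB)
  rw [det_mul_sub_mul_comm hA hB, trace_mul_comm A B, htr] at hdet
  -- `sin θ * tr (B Aⁿ) = α sin (nθ) + β cos (nθ)`
  set α := (B * A).trace - B.trace * Real.cos θ with hα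
  set β := B.trace * Real.sin θ with hβ
  have hamp : 4 * Real.sin θ ^ 2 < α ^ 2 + β ^ 2 := by
    rw [hα, hβ]
    linear_combination hdet + (4 - B.trace ^ 2) * Real.sin_sq_add_cos_sq θ
  obtain ⟨n, hn⟩ := exists_nat_lt_sin_add_cos_sq hθ hamp
  have hpow : Real.sin θ * (B * A ^ n).trace
      = α * Real.sin (n * θ) + β * Real.cos (n * θ) := by
    rw [← smul_eq_mul, ← trace_smul, ← Matrix.mul_smul, sin_smul_pow_eq hA htr, mul_sub,
      Matrix.mul_smul, Matrix.mul_smul, mul_one, trace_sub, trace_smul, trace_smul, smul_eq_mul,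
      smul_eq_mul, Real.sin_sub]
    ring
  refine ⟨n, (isHyperbolic_iff_four_lt_trace_sq (by rw [det_mul, det_pow, hA, hB]; simp)).2 ?_⟩
  rw [← hpow, mul_pow, mul_comm] at hn
  exact lt_of_mul_lt_mul_left hn (sq_nonneg _)

variable {X : Type*} [TopologicalSpace X] {S : Set X}

/-- Only countably many values `2 * cos θ` come from rational angles, too few for a nontrivial
connected set. -/
lemma exists_irrational_two_mul_cos_eq (hS : IsPreconnected S) {f : X → ℝ} (hf : ContinuousOn f S)
    (hnc : ¬ (f '' S).Subsingleton) (hbd : ∀ x ∈ S, f x ^ 2 ≤ 4) :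
    ∃ x ∈ S, ∃ θ, Irrational (θ / (2 * Real.pi)) ∧ f x = 2 * Real.cos θ := by
  by_contra! hrat
  have hsub : f '' S ⊆ range fun q : ℚ => 2 * Real.cos (q * (2 * Real.pi)) := by
    rintro _ ⟨x, hx, rfl⟩
    obtain ⟨h₁, h₂⟩ := abs_le_of_sq_le_sq' (show f x ^ 2 ≤ 2 ^ 2 by linarith [hbd x hx]) two_pos.le
    have hcos : f x = 2 * Real.cos (Real.arccos (f x / 2)) := by
      rw [Real.cos_arccos (by linarith) (by linarith)]
      ring
    have hnirr := mt (hrat x hx _) (not_not.2 hcos)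
    obtain ⟨q, hq⟩ := not_not.1 hnirr
    exact ⟨q, by simp only [hq, div_mul_cancel₀ _ Real.two_pi_pos.ne', ← hcos]⟩
  exact hnc (((countable_range _).mono hsub).isTotallyDisconnected _ subset_rfl (hS.image f hf))

theorem exists_isHyperbolic_mul_pow_of_isPreconnected (hS : IsPreconnected S)
    {F : X → Matrix (Fin 2) (Fin 2) ℝ} (hF : ContinuousOn F S) (hdet : ∀ x ∈ S, (F x).det = 1)
    (htr : ¬ ((fun x => (F x).trace) '' S).Subsingleton)
    (hcomm : ∀ x ∈ S, (F x).IsElliptic → ∃ y ∈ S, F x * F y ≠ F y * F x) :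
    ∃ x ∈ S, ∃ y ∈ S, ∃ n : ℕ, (F y * F x ^ n).IsHyperbolic := by
  by_cases hhyp : ∃ y ∈ S, (F y).IsHyperbolic
  · obtain ⟨y, hy, hFy⟩ := hhyp
    exact ⟨y, hy, y, hy, 0, by simpa using hFy⟩
  push Not at hhyp
  have hbd : ∀ x ∈ S, (F x).trace ^ 2 ≤ 4 := fun x hx =>
    not_lt.1 (mt (isHyperbolic_iff_four_lt_trace_sq (hdet x hx)).2 (hhyp x hx))
  obtain ⟨x, hx, θ, hθ, hxθ⟩ := exists_irrational_two_mul_cos_eq hS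
    (continuous_id.matrix_trace.comp_continuousOn hF) htr hbd
  obtain ⟨y, hy, hxy⟩ := hcomm x hx
    (isElliptic_of_trace_eq (hdet x hx) (sin_ne_zero_of_irrational hθ) hxθ)
  exact ⟨x, hx, y, hy, exists_isHyperbolic_mul_pow (hdet x hx) (hdet y hy) hxy hθ hxθ⟩

end Rotation

section FreeTransferMatrix

variable {δ ω ω₀ : ℝ}

/-- The transfer matrix of `-u'' = ω² u` over an interval of length `δ`, acting on the column
`(u, u')` of Cauchy data. -/
def freeTransferMatrix (δ ω : ℝ) : Matrix (Fin 2) (Fin 2) ℝ :=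
  !![Real.cos (ω * δ), Real.sin (ω * δ) / ω; -(ω * Real.sin (ω * δ)), Real.cos (ω * δ)]

lemma det_freeTransferMatrix (δ : ℝ) (hω : ω ≠ 0) : (freeTransferMatrix δ ω).det = 1 := by
  rw [freeTransferMatrix, det_fin_two_of]
  field_simp
  linarith [Real.sin_sq_add_cos_sq (ω * δ)]

lemma continuousOn_freeTransferMatrix (δ : ℝ) : ContinuousOn (freeTransferMatrix δ) {0}ᶜ := by
  have hdiv : ContinuousOn (fun ω : ℝ => Real.sin (ω * δ) / ω) {0}ᶜ :=
    ContinuousOn.div (by fun_prop) (by fun_prop) fun _ h => h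
  refine continuousOn_pi.2 fun i => continuousOn_pi.2 fun j => ?_
  fin_cases i <;> fin_cases j <;> simp only [freeTransferMatrix, Fin.mk_one, Fin.zero_eta, of_apply,
    cons_val', cons_val_zero, cons_val_one, cons_val_fin_one] <;> fun_prop

/-- After multiplication by `ω` the relation extends analytically to all `ω`, and is then evaluated
where `ωδ` is `π`, `2π`, `π/2` and `3π/2`. -/
lemma eq_zero_of_eventually_trig_combination_eq (hδ : δ ≠ 0) (hω₀ : ω₀ ≠ 0) {p q r k : ℝ}
    (h : ∀ᶠ ω in 𝓝 ω₀, p * Real.cos (ω * δ) + q * (Real.sin (ω * δ) / ω)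
      + r * -(ω * Real.sin (ω * δ)) = k) : p = 0 ∧ q = 0 ∧ r = 0 := by
  let g : ℝ → ℝ := fun ω => p * ω * Real.cos (ω * δ) + q * Real.sin (ω * δ)
      - r * ω ^ 2 * Real.sin (ω * δ) - k * ω
  have hg : AnalyticOnNhd ℝ g univ := fun x _ => by fun_prop
  have hg0 : g =ᶠ[𝓝 ω₀] 0 := by
    filter_upwards [h, eventually_ne_nhds hω₀] with ω hω hne
    simp only [g, Pi.zero_apply, ← hω]
    field_simp
    ring
  have hzero (θ : ℝ) : p * (θ * δ) * Real.cos θ + q * δ ^ 2 * Real.sin θ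
      - r * θ ^ 2 * Real.sin θ - k * (θ * δ) = 0 := by
    have hθ : g (θ / δ) = 0 := congrFun (hg.eq_of_eventuallyEq analyticOnNhd_const hg0) _
    simp only [g, div_mul_cancel₀ _ hδ] at hθ
    field_simp at hθ
    linear_combination hθ
  have hpi := hzero Real.pi
  have htwo_pi := hzero (2 * Real.pi)
  have hpi_half := hzero (Real.pi / 2)
  have hthree_pi_half := hzero (Real.pi / 2 + Real.pi)
  simp only [Real.cos_add_pi, Real.sin_add_pi, Real.cos_pi, Real.sin_pi, Real.cos_two_pi,
    Real.sin_two_pi, Real.cos_pi_div_two, Real.sin_pi_div_two] at *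
  have hp : p = 0 := by
    have : p * (Real.pi * δ) = 0 := by linarith
    simpa [Real.pi_ne_zero, hδ] using this
  have hk : k = 0 := by
    have : k * (Real.pi * δ) = 0 := by linarith
    simpa [Real.pi_ne_zero, hδ] using this
  subst hp hk
  have hr : r = 0 := by
    have : r * Real.pi ^ 2 = 0 := by linarith
    simpa [Real.pi_ne_zero] using this
  exact ⟨rfl, by simpa [hr, hδ] using hpi_half, hr⟩

variable {N : Type*} [AddCommGroup N] [Module ℝ N]

lemma map_eq_zero_of_eventually_map_freeTransferMatrix_eq (hδ : δ ≠ 0) (hω₀ : ω₀ ≠ 0)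
    (ℓ : Matrix (Fin 2) (Fin 2) ℝ →ₗ[ℝ] N) {k : N}
    (h : ∀ᶠ ω in 𝓝 ω₀, ℓ (freeTransferMatrix δ ω) = k) :
    ℓ 1 = 0 ∧ ℓ !![0, 1; 0, 0] = 0 ∧ ℓ !![0, 0; 1, 0] = 0 := by
  have hfree (ω : ℝ) : freeTransferMatrix δ ω = Real.cos (ω * δ) • 1
      + (Real.sin (ω * δ) / ω) • !![0, 1; 0, 0]
      + (-(ω * Real.sin (ω * δ))) • !![0, 0; 1, 0] := by
    ext i j
    fin_cases i <;> fin_cases j <;> simp [freeTransferMatrix]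
  have hdual (φ : Module.Dual ℝ N) :
      φ (ℓ 1) = 0 ∧ φ (ℓ !![0, 1; 0, 0]) = 0 ∧ φ (ℓ !![0, 0; 1, 0]) = 0 := by
    refine eq_zero_of_eventually_trig_combination_eq (k := φ k) hδ hω₀ ?_
    filter_upwards [h] with ω hω
    rw [← hω, hfree]
    simp only [map_add, map_smul, smul_eq_mul]
    ring
  exact ⟨(Module.forall_dual_apply_eq_zero_iff ℝ _).1 fun φ => (hdual φ).1,
    (Module.forall_dual_apply_eq_zero_iff ℝ _).1 fun φ => (hdual φ).2.1,
    (Module.forall_dual_apply_eq_zero_iff ℝ _).1 fun φ => (hdual φ).2.2⟩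

variable {R A : Matrix (Fin 2) (Fin 2) ℝ}

lemma not_eventually_trace_mul_freeTransferMatrix_eq (hδ : δ ≠ 0) (hω₀ : ω₀ ≠ 0)
    (hR : 0 < R.det) (k : ℝ) : ¬ ∀ᶠ ω in 𝓝 ω₀, (R * freeTransferMatrix δ ω).trace = k := by
  intro h
  obtain ⟨h1, h2, h3⟩ := map_eq_zero_of_eventually_map_freeTransferMatrix_eq hδ hω₀
    (traceLinearMap (Fin 2) ℝ ℝ ∘ₗ LinearMap.mulLeft ℝ R) h
  have h11 : R 1 1 = -R 0 0 := by simpa [trace_fin_two, add_eq_zero_iff_eq_neg'] using h1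
  have h10 : R 1 0 = 0 := by simpa [trace_fin_two, Matrix.mul_apply] using h2
  rw [det_fin_two, h11, h10] at hR
  nlinarith [sq_nonneg (R 0 0)]

lemma not_eventually_commute_freeTransferMatrix (hδ : δ ≠ 0) (hω₀ : ω₀ ≠ 0) (hR : R.det ≠ 0)
    (hA : A.IsElliptic) : ¬ ∀ᶠ ω in 𝓝 ω₀,
      A * (R * freeTransferMatrix δ ω) = R * freeTransferMatrix δ ω * A := by
  intro h
  let ℓ := LinearMap.mulLeft ℝ A ∘ₗ LinearMap.mulLeft ℝ R
    - LinearMap.mulRight ℝ A ∘ₗ LinearMap.mulLeft ℝ R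
  obtain ⟨h1, h2, -⟩ := map_eq_zero_of_eventually_map_freeTransferMatrix_eq hδ hω₀ ℓ
    (h.mono fun ω hω => sub_eq_zero.2 hω)
  have hAR : A * R = R * A := by simpa [ℓ, sub_eq_zero] using h1
  have hcomm : A * !![0, 1; 0, 0] = !![0, 1; 0, 0] * A := by
    have hunit : IsUnit R := (isUnit_iff_isUnit_det R).2 (isUnit_iff_ne_zero.2 hR)
    refine hunit.mul_left_cancel ?_
    rw [← mul_assoc, ← hAR, mul_assoc, ← mul_assoc R]
    exact sub_eq_zero.1 h2
  refine hA.c_ne_zero ?_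
  simpa [Matrix.mul_apply] using (congrFun₂ hcomm 0 0).symm

theorem exists_isHyperbolic_mul_freeTransferMatrix (hδ : δ ≠ 0) (hR : R.det = 1) {S : Set ℝ}
    (hS : IsPreconnected S) (h0 : 0 ∉ S) (hint : (interior S).Nonempty) :
    ∃ ω ∈ S, ∃ ω' ∈ S, ∃ n : ℕ,
      (R * freeTransferMatrix δ ω' * (R * freeTransferMatrix δ ω) ^ n).IsHyperbolic := by
  obtain ⟨ω₀, hω₀S⟩ := hint
  have hnhds : S ∈ 𝓝 ω₀ := mem_interior_iff_mem_nhds.1 hω₀S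
  have hne {ω : ℝ} (hω : ω ∈ S) : ω ≠ 0 := ne_of_mem_of_not_mem hω h0
  have hω₀ : ω₀ ≠ 0 := hne (interior_subset hω₀S)
  refine exists_isHyperbolic_mul_pow_of_isPreconnected hS ?_ (fun ω hω => ?_) (fun hsub => ?_)
    (fun ω _ hell => ?_)
  · exact (continuous_const.matrix_mul continuous_id).comp_continuousOn
      ((continuousOn_freeTransferMatrix δ).mono fun ω hω => hne hω)
  · rw [det_mul, hR, det_freeTransferMatrix δ (hne hω), one_mul]
  · refine not_eventually_trace_mul_freeTransferMatrix_eq hδ hω₀ (hR ▸ one_pos)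
      (R * freeTransferMatrix δ ω₀).trace ?_
    filter_upwards [hnhds] with ω hω
    exact hsub (mem_image_of_mem _ hω) (mem_image_of_mem _ (mem_of_mem_nhds hnhds))
  · by_contra! hcomm
    exact not_eventually_commute_freeTransferMatrix hδ hω₀ (hR ▸ one_ne_zero) hell
      (mem_of_superset hnhds hcomm)

end FreeTransferMatrix

/-! ### Carathéodory solutions and transfer matrices -/

section Primitive

variable {E : Type*} [NormedAddCommGroup E] [NormedSpace ℝ E] {F G f g : ℝ → E} {s t r : ℝ}

/-- `F` is an indefinite integral of the integrable function `f` between `s` and `t`: this is how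
derivatives are expressed for functions that are merely absolutely continuous. -/
structure IsAntideriv (F f : ℝ → E) (s t : ℝ) : Prop where
  intervalIntegrable : IntervalIntegrable f volume s t
  eq_add_integral : ∀ x ∈ uIcc s t, F x = F s + ∫ r in s..x, f r

namespace IsAntideriv

lemma right_eq (h : IsAntideriv F f s t) : F t = F s + ∫ r in s..t, f r :=
  h.eq_add_integral t right_mem_uIcc

lemma continuousOn (h : IsAntideriv F f s t) : ContinuousOn F (uIcc s t) :=
  (continuousOn_const.add (intervalIntegral.continuousOn_primitive_interval' h.intervalIntegrable
    left_mem_uIcc)).congr h.eq_add_integral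

lemma continuous (h : ∀ s t, IsAntideriv F f s t) : Continuous F :=
  continuous_iff_continuousAt.2 fun x => (h (x - 1) (x + 1)).continuousOn.continuousAt <| by
    rw [uIcc_of_le (by linarith)]
    exact Icc_mem_nhds (by linarith) (by linarith)

lemma of_locallyIntegrable (hf : LocallyIntegrable f) (a s t : ℝ) :
    IsAntideriv (fun x => ∫ r in a..x, f r) f s t := by
  have hint (a b : ℝ) : IntervalIntegrable f volume a b :=
    (hf.integrableOn_isCompact isCompact_uIcc).intervalIntegrable
  exact ⟨hint s t, fun x _ =>
    (intervalIntegral.integral_add_adjacent_intervals (hint a s) (hint s x)).symm⟩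

lemma of_hasDerivAt [CompleteSpace E] (hF : ∀ x ∈ uIcc s t, HasDerivAt F (f x) x)
    (hf : IntervalIntegrable f volume s t) : IsAntideriv F f s t := by
  refine ⟨hf, fun x hx => ?_⟩
  have hsub : uIcc s x ⊆ uIcc s t := uIcc_subset_uIcc_left hx
  rw [intervalIntegral.integral_eq_sub_of_hasDerivAt (fun y hy => hF y (hsub hy))
    (hf.mono_set hsub), add_sub_cancel]

lemma congr (h : IsAntideriv F f s t) (hF : EqOn F G (uIcc s t))
    (hf : f =ᵐ[volume.restrict (uIoc s t)] g) : IsAntideriv G g s t := by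
  refine ⟨h.intervalIntegrable.congr_ae hf, fun x hx => ?_⟩
  rw [← hF hx, ← hF left_mem_uIcc, h.eq_add_integral x hx]
  congr 1
  exact intervalIntegral.integral_congr_ae_restrict
    (ae_restrict_of_ae_restrict_of_subset
      (uIoc_subset_uIoc_of_uIcc_subset_uIcc (uIcc_subset_uIcc_left hx)) hf)

lemma mono (h : IsAntideriv F f s t) {a b : ℝ} (ha : a ∈ uIcc s t) (hb : b ∈ uIcc s t) :
    IsAntideriv F f a b := by
  refine ⟨h.intervalIntegrable.mono_set (uIcc_subset_uIcc ha hb), fun x hx => ?_⟩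
  have hx' := uIcc_subset_uIcc ha hb hx
  rw [h.eq_add_integral x hx', h.eq_add_integral a ha, add_assoc,
    intervalIntegral.integral_add_adjacent_intervals
      (h.intervalIntegrable.mono_set (uIcc_subset_uIcc_left ha))
      (h.intervalIntegrable.mono_set (uIcc_subset_uIcc ha hx'))]

lemma comp_add_right {c : ℝ} (h : IsAntideriv F f (s + c) (t + c)) :
    IsAntideriv (fun x => F (x + c)) (fun x => f (x + c)) s t := by
  refine ⟨by simpa using h.intervalIntegrable.comp_add_right c, fun x hx => ?_⟩
  rw [intervalIntegral.integral_comp_add_right]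
  refine h.eq_add_integral _ ?_
  rw [← Set.image_add_const_uIcc]
  exact mem_image_of_mem _ hx

lemma trans (h : IsAntideriv F f s t) (h' : IsAntideriv F f t r) (hst : s ≤ t) (htr : t ≤ r) :
    IsAntideriv F f s r := by
  refine ⟨h.intervalIntegrable.trans h'.intervalIntegrable, fun x hx => ?_⟩
  rw [uIcc_of_le (hst.trans htr)] at hx
  rcases le_total x t with hxt | htx
  · exact h.eq_add_integral x (by rw [uIcc_of_le hst]; exact ⟨hx.1, hxt⟩)
  · have hx' : x ∈ uIcc t r := by rw [uIcc_of_le htr]; exact ⟨htx, hx.2⟩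
    rw [h'.eq_add_integral x hx', h.right_eq, add_assoc,
      intervalIntegral.integral_add_adjacent_intervals h.intervalIntegrable
        (h'.intervalIntegrable.mono_set (uIcc_subset_uIcc_left hx'))]

lemma glue (h : IsAntideriv F f s t) (h' : IsAntideriv G g t r) (hst : s ≤ t) (htr : t ≤ r)
    (hFG : F t = G t) : IsAntideriv (fun x => if x ≤ t then F x else G x)
      (fun x => if x ≤ t then f x else g x) s r := by
  refine trans (h.congr (fun x hx => ?_) ?_) (h'.congr (fun x hx => ?_) ?_) hst htr
  · rw [uIcc_of_le hst] at hx
    exact (if_pos hx.2).symm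
  · filter_upwards [ae_restrict_mem measurableSet_uIoc] with x hx
    rw [uIoc_of_le hst] at hx
    exact (if_pos hx.2).symm
  · rw [uIcc_of_le htr] at hx
    rcases hx.1.eq_or_lt with rfl | hlt
    · simpa using hFG.symm
    · exact (if_neg hlt.not_ge).symm
  · filter_upwards [ae_restrict_mem measurableSet_uIoc] with x hx
    rw [uIoc_of_le htr] at hx
    exact (if_neg hx.1.not_ge).symm

lemma clm_apply {E' : Type*} [NormedAddCommGroup E'] [NormedSpace ℝ E'] [CompleteSpace E]
    [CompleteSpace E'] (L : E →L[ℝ] E') (h : IsAntideriv F f s t) :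
    IsAntideriv (fun x => L (F x)) (fun x => L (f x)) s t := by
  refine ⟨⟨L.integrable_comp h.1.1, L.integrable_comp h.1.2⟩, fun x hx => ?_⟩
  rw [h.eq_add_integral x hx, map_add, L.intervalIntegral_comp_comm
    (h.intervalIntegrable.mono_set (uIcc_subset_uIcc_left hx))]

lemma const_add (c : E) (h : IsAntideriv F f s t) : IsAntideriv (fun x => c + F x) f s t :=
  ⟨h.intervalIntegrable, fun x hx => by rw [h.eq_add_integral x hx, add_assoc]⟩

lemma sub (hF : IsAntideriv F f s t) (hG : IsAntideriv G g s t) :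
    IsAntideriv (fun x => F x - G x) (fun x => f x - g x) s t := by
  refine ⟨hF.intervalIntegrable.sub hG.intervalIntegrable, fun x hx => ?_⟩
  have hsub := uIcc_subset_uIcc_left hx
  rw [hF.eq_add_integral x hx, hG.eq_add_integral x hx, intervalIntegral.integral_sub
    (hF.intervalIntegrable.mono_set hsub) (hG.intervalIntegrable.mono_set hsub)]
  abel

lemma mul {F f G g : ℝ → ℝ} (hF : IsAntideriv F f s t) (hG : IsAntideriv G g s t) :
    IsAntideriv (fun x => F x * G x) (fun x => f x * G x + F x * g x) s t := by
  refine ⟨(hF.intervalIntegrable.mul_continuousOn hG.continuousOn).add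
    (hG.intervalIntegrable.continuousOn_mul hF.continuousOn), fun x hx => ?_⟩
  replace hF := hF.mono left_mem_uIcc hx
  replace hG := hG.mono left_mem_uIcc hx
  have hacF : AbsolutelyContinuousOnInterval (fun y => F s + ∫ r in s..y, f r) s x :=
    contDiff_const.contDiffOn.absolutelyContinuousOnInterval.add
      (hF.intervalIntegrable.absolutelyContinuousOnInterval_intervalIntegral left_mem_uIcc)
  have hacG : AbsolutelyContinuousOnInterval (fun y => G s + ∫ r in s..y, g r) s x :=
    contDiff_const.contDiffOn.absolutelyContinuousOnInterval.add
      (hG.intervalIntegrable.absolutelyContinuousOnInterval_intervalIntegral left_mem_uIcc)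
  have hparts := hacF.integral_deriv_mul_eq_sub hacG
  simp only [← hF.right_eq, ← hG.right_eq, intervalIntegral.integral_same, add_zero] at hparts
  rw [← sub_eq_iff_eq_add', ← hparts]
  refine intervalIntegral.integral_congr_ae ?_
  filter_upwards [hF.intervalIntegrable.ae_hasDerivAt_integral,
    hG.intervalIntegrable.ae_hasDerivAt_integral] with y hFy hGy hy
  have hyI : y ∈ uIcc s x := uIoc_subset_uIcc hy
  simp only [((hFy hyI s left_mem_uIcc).const_add (F s)).deriv,
    ((hGy hyI s left_mem_uIcc).const_add (G s)).deriv, ← hF.eq_add_integral y hyI,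
    ← hG.eq_add_integral y hyI]

end IsAntideriv

end Primitive

section Propagator

variable {R : Type*} [NormedRing R] [NormedAlgebra ℝ R] {A B : ℝ → R} {P Q : R} {s t r : ℝ}

/-- `P` is the value at `t` of the solution of `M' = A M`, `M s = 1`. -/
def IsPropagator (A : ℝ → R) (s t : ℝ) (P : R) : Prop :=
  ∃ M : ℝ → R, IsAntideriv M (fun x => A x * M x) s t ∧ M s = 1 ∧ M t = P

namespace IsPropagator

lemma refl (A : ℝ → R) (s : ℝ) : IsPropagator A s s 1 :=
  ⟨1, ⟨IntervalIntegrable.refl, fun x hx => by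
    rw [uIcc_self, Set.mem_singleton_iff] at hx
    simp [hx]⟩, rfl, rfl⟩

lemma congr (hP : IsPropagator A s t P) (hAB : A =ᵐ[volume.restrict (uIoc s t)] B) :
    IsPropagator B s t P := by
  obtain ⟨M, hM, hs, ht⟩ := hP
  refine ⟨M, hM.congr (fun _ _ => rfl) ?_, hs, ht⟩
  filter_upwards [hAB] with x hx
  rw [hx]

lemma of_comp_add_right {c : ℝ} (hP : IsPropagator (fun x => A (x + c)) s t P) :
    IsPropagator A (s + c) (t + c) P := by
  obtain ⟨M, hM, hs, ht⟩ := hP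
  have hM' : IsAntideriv M (fun x => A (x + c) * M x) (s + c + -c) (t + c + -c) := by
    simpa using hM
  exact ⟨fun x => M (x + -c), by simpa using hM'.comp_add_right, by simpa using hs,
    by simpa using ht⟩

lemma trans [CompleteSpace R] (hP : IsPropagator A s t P) (hQ : IsPropagator A t r Q)
    (hst : s ≤ t) (htr : t ≤ r) : IsPropagator A s r (Q * P) := by
  obtain ⟨M, hM, hMs, rfl⟩ := hP
  obtain ⟨N, hN, hNt, rfl⟩ := hQ
  have hNP : IsAntideriv (fun x => N x * M t) (fun x => A x * N x * M t) t r :=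
    hN.clm_apply ((ContinuousLinearMap.mul ℝ R).flip (M t))
  refine ⟨_, (hM.glue hNP hst htr (by rw [hNt, one_mul])).congr (fun _ _ => rfl) (.of_forall ?_),
    by rw [if_pos hst, hMs], ?_⟩
  · intro x
    dsimp only
    split_ifs
    · rfl
    · exact mul_assoc _ _ _
  · split_ifs with hrt
    · rw [le_antisymm hrt htr, hNt, one_mul]
    · rfl

lemma pow [CompleteSpace R] {c : ℝ} (hc : 0 ≤ c) (n : ℕ)
    (h : ∀ k < n, IsPropagator (fun x => A (x + k * c)) 0 c P) :
    IsPropagator A 0 (n * c) (P ^ n) := by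
  induction n with
  | zero => simpa using refl A 0
  | succ n ih =>
    have hn : IsPropagator A (n * c) ((n + 1 : ℕ) * c) P := by
      convert! (h n n.lt_succ_self).of_comp_add_right using 1
      · ring
      · push_cast; ring
    rw [pow_succ']
    exact (ih fun k hk => h k (hk.trans n.lt_succ_self)).trans hn (by positivity)
      (by push_cast; nlinarith)

end IsPropagator

/-- One step of Picard iteration for `M' = A M`, `M s = 1`. -/
def picard [CompleteSpace R] (hst : s ≤ t) (hA : IntervalIntegrable A volume s t)
    (f : C(Icc s t, R)) : C(Icc s t, R) where
  toFun x := 1 + ∫ r in s..x, A r * IccExtend hst f r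
  continuous_toFun := continuous_const.add <| by
    have := intervalIntegral.continuousOn_primitive_interval'
      (hA.mul_continuousOn (f.continuous.Icc_extend' (h := hst)).continuousOn) left_mem_uIcc
    rw [uIcc_of_le hst] at this
    exact this.domRestrict

lemma contractingWith_picard [CompleteSpace R] (hst : s ≤ t) (hA : IntervalIntegrable A volume s t)
    (hsmall : ∫ r in s..t, ‖A r‖ ≤ 1 / 2) : ContractingWith (1 / 2) (picard hst hA) := by
  refine ⟨by rw [← NNReal.coe_lt_coe]; norm_num, LipschitzWith.of_dist_le_mul fun f g => ?_⟩
  rw [ContinuousMap.dist_le (by positivity)]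
  intro x
  have hsub : uIcc s x ⊆ uIcc s t := uIcc_subset_uIcc_left (Icc_subset_uIcc x.2)
  have hint (f : C(Icc s t, R)) :
      IntervalIntegrable (fun r => A r * IccExtend hst f r) volume s x :=
    (hA.mono_set hsub).mul_continuousOn (f.continuous.Icc_extend' (h := hst)).continuousOn
  have hbound : ∫ r in s..x, ‖A r‖ * dist f g ≤ 1 / 2 * dist f g := by
    rw [intervalIntegral.integral_mul_const]
    gcongr
    exact (intervalIntegral.integral_mono_interval le_rfl x.2.1 x.2.2
      (.of_forall fun r => norm_nonneg _) hA.norm).trans hsmall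
  simp only [picard, ContinuousMap.coe_mk, dist_add_left, NNReal.coe_div, NNReal.coe_one,
    NNReal.coe_ofNat]
  rw [dist_eq_norm, ← intervalIntegral.integral_sub (hint f) (hint g)]
  refine (intervalIntegral.norm_integral_le_of_norm_le x.2.1 (.of_forall fun r _ => ?_)
    ((hA.mono_set hsub).norm.mul_const _)).trans hbound
  rw [← mul_sub]
  refine (norm_mul_le _ _).trans ?_
  gcongr
  rw [← dist_eq_norm]
  exact ContinuousMap.dist_apply_le_dist _

lemma exists_isPropagator_of_integral_norm_le [CompleteSpace R] (hst : s ≤ t)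
    (hA : IntervalIntegrable A volume s t) (hsmall : ∫ r in s..t, ‖A r‖ ≤ 1 / 2) :
    ∃ P, IsPropagator A s t P := by
  obtain ⟨f, hf⟩ : ∃ f, picard hst hA f = f :=
    ⟨_, (contractingWith_picard hst hA hsmall).fixedPoint_isFixedPt⟩
  have hfix : ∀ x ∈ uIcc s t, IccExtend hst f x = 1 + ∫ r in s..x, A r * IccExtend hst f r := by
    intro x hx
    rw [uIcc_of_le hst] at hx
    conv_lhs => rw [IccExtend_of_mem hst f hx, ← hf]
    rfl
  have hs : IccExtend hst f s = 1 := by simpa using hfix s left_mem_uIcc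
  exact ⟨_, _, ⟨hA.mul_continuousOn (f.continuous.Icc_extend' (h := hst)).continuousOn,
    by rwa [hs]⟩, hs, rfl⟩

theorem exists_isPropagator [CompleteSpace R] (hst : s ≤ t) (hA : IntervalIntegrable A volume s t) :
    ∃ P, IsPropagator A s t P := by
  obtain ⟨N, hN⟩ := exists_nat_ge (2 * ∫ r in s..t, ‖A r‖)
  replace hN : ∫ r in s..t, ‖A r‖ ≤ N / 2 := by linarith
  induction N generalizing t with
  | zero => exact exists_isPropagator_of_integral_norm_le hst hA (hN.trans (by norm_num))
  | succ N ih =>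
    by_cases hN' : ∫ r in s..t, ‖A r‖ ≤ N / 2
    · exact ih hst hA hN'
    have hcont := intervalIntegral.continuousOn_primitive_interval' hA.norm left_mem_uIcc
    rw [uIcc_of_le hst] at hcont
    obtain ⟨c, hc, hcN⟩ := intermediate_value_Icc hst hcont
      (show (N / 2 : ℝ) ∈ Icc _ _ from
        ⟨by simp only [intervalIntegral.integral_same]; positivity, (not_le.1 hN').le⟩)
    have hcu : c ∈ uIcc s t := Icc_subset_uIcc hc
    have hsc := hA.mono_set (uIcc_subset_uIcc_left hcu)
    have hct := hA.mono_set (uIcc_subset_uIcc_right hcu)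
    obtain ⟨P, hP⟩ := ih hc.1 hsc hcN.le
    obtain ⟨Q, hQ⟩ := exists_isPropagator_of_integral_norm_le hc.2 hct (by
      have := intervalIntegral.integral_add_adjacent_intervals hsc.norm hct.norm
      push_cast at hN
      simp only at hcN
      linarith)
    exact ⟨_, hP.trans hQ hc.1 hc.2⟩

end Propagator

section Schrodinger

open scoped Matrix.Norms.Operator

variable {q h g g₁ u v : ℝ → ℝ} {s t : ℝ} {P : Matrix (Fin 2) (Fin 2) ℝ}

/-- `(u, v) = (u, u')` is a Carathéodory solution of `-u'' + q u = h` between `s` and `t`. -/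
structure IsSol (q h : ℝ → ℝ) (s t : ℝ) (u v : ℝ → ℝ) : Prop where
  left : IsAntideriv u v s t
  right : IsAntideriv v (fun x => q x * u x - h x) s t

lemma IsSol.comp_add_right {c : ℝ} (hu : IsSol q h (s + c) (t + c) u v) :
    IsSol (fun x => q (x + c)) (fun x => h (x + c)) s t (fun x => u (x + c))
      (fun x => v (x + c)) :=
  ⟨hu.left.comp_add_right, hu.right.comp_add_right⟩

/-- The Wronskian of two functions `g`, `u` with derivatives `g₁`, `v`. -/
def wronskian (g g₁ u v : ℝ → ℝ) (x : ℝ) : ℝ := g x * v x - g₁ x * u x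

lemma IsSol.isAntideriv_wronskian (hg : IsSol q h s t g g₁) (hu : IsSol q 0 s t u v) :
    IsAntideriv (wronskian g g₁ u v) (fun x => h x * u x) s t := by
  refine ((hg.left.mul hu.right).sub (hg.right.mul hu.left)).congr (fun _ _ => rfl)
    (.of_forall fun x => ?_)
  simp only [Pi.zero_apply]
  ring

/-- The coefficient of the first order system for `(u, u')` equivalent to `-u'' + q u = 0`. -/
def schrodingerMatrix (q : ℝ → ℝ) (x : ℝ) : Matrix (Fin 2) (Fin 2) ℝ := !![0, 1; q x, 0]

lemma exists_isPropagator_schrodingerMatrix (hst : s ≤ t) (hq : IntervalIntegrable q volume s t) :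
    ∃ P, IsPropagator (schrodingerMatrix q) s t P := by
  have hdecomp : schrodingerMatrix q =
      fun x => q x • (!![0, 0; 1, 0] : Matrix (Fin 2) (Fin 2) ℝ) - !![0, -1; 0, 0] := by
    ext x i j
    fin_cases i <;> fin_cases j <;> simp [schrodingerMatrix]
  refine exists_isPropagator hst ?_
  rw [hdecomp]
  exact (hq.smul_continuousOn continuousOn_const).sub (continuous_const.intervalIntegrable s t)

lemma IsAntideriv.matrix_apply {M N : ℝ → Matrix (Fin 2) (Fin 2) ℝ} (hM : IsAntideriv M N s t)
    (i j : Fin 2) : IsAntideriv (fun x => M x i j) (fun x => N x i j) s t :=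
  hM.clm_apply (LinearMap.toContinuousLinearMap (Matrix.entryLinearMap ℝ ℝ i j))

lemma IsAntideriv.mulVec_apply {M N : ℝ → Matrix (Fin 2) (Fin 2) ℝ} (hM : IsAntideriv M N s t)
    (z : Fin 2 → ℝ) (i : Fin 2) :
    IsAntideriv (fun x => (M x *ᵥ z) i) (fun x => (N x *ᵥ z) i) s t :=
  let L : Matrix (Fin 2) (Fin 2) ℝ →ₗ[ℝ] ℝ :=
    LinearMap.proj i ∘ₗ (Matrix.mulVecBilin ℝ ℝ).flip z
  hM.clm_apply L.toContinuousLinearMap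

lemma IsPropagator.exists_isSol (hP : IsPropagator (schrodingerMatrix q) s t P) (z : Fin 2 → ℝ) :
    ∃ u v, IsSol q 0 s t u v ∧ ![u s, v s] = z ∧ ![u t, v t] = P *ᵥ z := by
  obtain ⟨M, hM, hs, rfl⟩ := hP
  have hM0 := hM.mulVec_apply z 0
  have hM1 := hM.mulVec_apply z 1
  simp only [← Matrix.mulVec_mulVec] at hM0 hM1
  refine ⟨fun x => (M x *ᵥ z) 0, fun x => (M x *ᵥ z) 1, ⟨?_, ?_⟩, ?_, ?_⟩
  · simpa [schrodingerMatrix, Matrix.mulVec_eq_sum, Fin.sum_univ_two] using hM0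
  · simpa [schrodingerMatrix, Matrix.mulVec_eq_sum, Fin.sum_univ_two, mul_comm (q _)] using hM1
  · ext i; fin_cases i <;> simp [hs]
  · ext i; fin_cases i <;> rfl

/-- Liouville's formula for `2 × 2` systems. -/
lemma IsAntideriv.det {A M : ℝ → Matrix (Fin 2) (Fin 2) ℝ}
    (hM : IsAntideriv M (fun x => A x * M x) s t) :
    IsAntideriv (fun x => (M x).det) (fun x => (A x).trace * (M x).det) s t := by
  refine (((hM.matrix_apply 0 0).mul (hM.matrix_apply 1 1)).sub
    ((hM.matrix_apply 0 1).mul (hM.matrix_apply 1 0))).congr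
    (fun x _ => (Matrix.det_fin_two _).symm) (.of_forall fun x => ?_)
  simp only [Matrix.det_fin_two, Matrix.trace_fin_two, Matrix.mul_apply, Fin.sum_univ_two]
  ring

lemma IsPropagator.det_eq_one (hP : IsPropagator (schrodingerMatrix q) s t P) : P.det = 1 := by
  obtain ⟨M, hM, hs, rfl⟩ := hP
  simpa [schrodingerMatrix, Matrix.trace_fin_two, hs] using hM.det.right_eq

lemma hasDerivAt_freeTransferMatrix {ω : ℝ} (hω : ω ≠ 0) (x : ℝ) :
    HasDerivAt (fun x => freeTransferMatrix x ω)
      (schrodingerMatrix (fun _ => -ω ^ 2) x * freeTransferMatrix x ω) x := by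
  have hlin : HasDerivAt (fun x => ω * x) ω x := by simpa using (hasDerivAt_id x).const_mul ω
  have hcos : HasDerivAt (fun x => Real.cos (ω * x)) (-(ω * Real.sin (ω * x))) x :=
    hlin.cos.congr_deriv (by ring)
  have hsin : HasDerivAt (fun x => Real.sin (ω * x)) (ω * Real.cos (ω * x)) x :=
    hlin.sin.congr_deriv (by ring)
  refine hasDerivAt_pi.2 fun i => hasDerivAt_pi.2 fun j => ?_
  fin_cases i <;> fin_cases j <;>
    simp only [freeTransferMatrix, schrodingerMatrix, Matrix.mul_apply, Fin.sum_univ_two,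
      Fin.zero_eta, Fin.mk_one, of_apply, cons_val', cons_val_zero, cons_val_one,
      cons_val_fin_one, zero_mul, one_mul, zero_add, add_zero]
  · exact hcos
  · exact (hsin.div_const ω).congr_deriv (by field_simp)
  · exact (hsin.const_mul ω).neg.congr_deriv (by ring)
  · exact hcos.congr_deriv (by field_simp)

lemma isPropagator_freeTransferMatrix (δ : ℝ) {ω : ℝ} (hω : ω ≠ 0) :
    IsPropagator (schrodingerMatrix fun _ => -ω ^ 2) 0 δ (freeTransferMatrix δ ω) := by
  have hderiv := hasDerivAt_freeTransferMatrix hω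
  have hcont : Continuous fun x => freeTransferMatrix x ω :=
    continuous_iff_continuousAt.2 fun x => (hderiv x).continuousAt
  refine ⟨fun x => freeTransferMatrix x ω, .of_hasDerivAt (fun x _ => hderiv x)
    ((continuous_const.mul hcont).intervalIntegrable _ _), ?_, rfl⟩
  ext i j
  fin_cases i <;> fin_cases j <;> simp [freeTransferMatrix]

end Schrodinger

/-! ### Regularity of weak solutions -/

section Weak

variable {f g h k q r φ θ η F : ℝ → ℝ}

/-- Test functions: smooth functions with compact support. -/
structure IsTestFunction (φ : ℝ → ℝ) : Prop where
  contDiff : ContDiff ℝ (⊤ : ℕ∞) φ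
  hasCompactSupport : HasCompactSupport φ

namespace IsTestFunction

lemma continuous (hφ : IsTestFunction φ) : Continuous φ := hφ.contDiff.continuous

lemma differentiable (hφ : IsTestFunction φ) : Differentiable ℝ φ :=
  hφ.contDiff.differentiable (by simp)

protected lemma deriv (hφ : IsTestFunction φ) : IsTestFunction (deriv φ) :=
  ⟨(contDiff_infty_iff_deriv.1 hφ.contDiff).2, hφ.hasCompactSupport.deriv⟩

lemma sub_const_mul (hφ : IsTestFunction φ) (hθ : IsTestFunction θ) (c : ℝ) :
    IsTestFunction (fun x => φ x - c * θ x) :=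
  ⟨hφ.contDiff.sub (contDiff_const.mul hθ.contDiff),
    hφ.hasCompactSupport.sub hθ.hasCompactSupport.mul_left⟩

lemma integrable_mul (hφ : IsTestFunction φ) (hf : LocallyIntegrable f) :
    Integrable (fun x => f x * φ x) := by
  simpa [mul_comm] using
    hf.integrable_smul_left_of_hasCompactSupport hφ.continuous hφ.hasCompactSupport

lemma integrable (hφ : IsTestFunction φ) : Integrable φ :=
  hφ.continuous.integrable_of_hasCompactSupport hφ.hasCompactSupport

lemma exists_tsupport_subset_Ioo (hφ : IsTestFunction φ) :
    ∃ R > 0, tsupport φ ⊆ Ioo (-R) R := by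
  obtain ⟨R, hR⟩ := hφ.hasCompactSupport.isCompact.isBounded.subset_ball 0
  refine ⟨max R 1, by positivity, hR.trans ?_⟩
  rw [Real.ball_eq_Ioo]
  apply Ioo_subset_Ioo <;> simp

lemma exists_deriv_eq (hθ : IsTestFunction θ) (h0 : ∫ x, θ x = 0) :
    ∃ Φ, IsTestFunction Φ ∧ deriv Φ = θ := by
  obtain ⟨R, -, hR⟩ := hθ.exists_tsupport_subset_Ioo
  have hsupp : Function.support θ ⊆ Ioo (-R) R := (subset_tsupport θ).trans hR
  have hderiv (x : ℝ) : HasDerivAt (fun x => ∫ t in (-R)..x, θ t) (θ x) x :=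
    (hθ.continuous.integral_hasStrictDerivAt _ _).hasDerivAt
  have hderiv' : deriv (fun x => ∫ t in (-R)..x, θ t) = θ :=
    funext fun x => (hderiv x).deriv
  refine ⟨_, ⟨contDiff_infty_iff_deriv.2
    ⟨fun x => (hderiv x).differentiableAt, hderiv'.symm ▸ hθ.contDiff⟩, ?_⟩, hderiv'⟩
  refine HasCompactSupport.intro (isCompact_Icc (a := -R) (b := R)) fun x hx => ?_
  rcases lt_or_ge x (-R) with hxR | hxR
  · refine intervalIntegral.integral_zero_ae (.of_forall fun y hy => ?_)
    rw [uIoc_of_ge hxR.le] at hy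
    exact Function.notMem_support.1 fun hne => (hsupp hne).1.not_ge hy.2
  · have hRx : R < x := not_le.1 fun hle => hx ⟨hxR, hle⟩
    rw [intervalIntegral.integral_eq_integral_of_support_subset
      fun y hy => ⟨(hsupp hy).1, ((hsupp hy).2.trans hRx).le⟩, h0]

lemma exists_deriv_eq_sub (hθ : IsTestFunction θ) (hη : IsTestFunction η) (hη1 : ∫ x, η x = 1) :
    ∃ Φ, IsTestFunction Φ ∧ deriv Φ = fun x => θ x - (∫ y, θ y) * η x := by
  refine (hθ.sub_const_mul hη _).exists_deriv_eq ?_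
  rw [integral_sub hθ.integrable (hη.integrable.const_mul _), integral_const_mul, hη1]
  ring

lemma exists_integral_eq_one : ∃ η, IsTestFunction η ∧ ∫ x, η x = 1 := by
  let b : ContDiffBump (0 : ℝ) := default
  exact ⟨b.normed volume, ⟨b.contDiff_normed, b.hasCompactSupport_normed⟩, b.integral_normed⟩

end IsTestFunction

lemma IsAntideriv.integral_mul_deriv (hF : ∀ s t, IsAntideriv F f s t) (hφ : IsTestFunction φ) :
    ∫ x, F x * deriv φ x = -∫ x, f x * φ x := by
  obtain ⟨R, _, hR⟩ := hφ.exists_tsupport_subset_Ioo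
  have hφR : φ R = 0 := image_eq_zero_of_notMem_tsupport fun h => (hR h).2.false
  have hφR' : φ (-R) = 0 := image_eq_zero_of_notMem_tsupport fun h => (hR h).1.false
  have hφ' : IsAntideriv φ (deriv φ) (-R) R :=
    .of_hasDerivAt (fun x _ => hφ.differentiable.differentiableAt.hasDerivAt)
      (hφ.deriv.continuous.intervalIntegrable _ _)
  have hparts := ((hF (-R) R).mul hφ').right_eq
  rw [hφR, hφR', intervalIntegral.integral_add
    ((hF _ _).intervalIntegrable.mul_continuousOn hφ.continuous.continuousOn)
    (hφ'.intervalIntegrable.continuousOn_mul (hF _ _).continuousOn),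
    intervalIntegral.integral_eq_integral_of_support_subset,
    intervalIntegral.integral_eq_integral_of_support_subset] at hparts
  · linarith
  · exact (Function.support_mul_subset_right _ _).trans
      ((support_deriv_subset.trans hR).trans Ioo_subset_Ioc_self)
  · exact (Function.support_mul_subset_right _ _).trans
      (((subset_tsupport φ).trans hR).trans Ioo_subset_Ioc_self)

/-- A functional vanishing on the derivatives of test functions, which are the test functions of
integral `0`, is a multiple of the integral. -/
lemma exists_integral_deriv_add_integral_eq (hf : LocallyIntegrable f) (hk : LocallyIntegrable k)
    (hfk : ∀ φ, IsTestFunction φ →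
      (∫ x, f x * deriv (deriv φ) x) + ∫ x, k x * deriv φ x = 0) :
    ∃ c, ∀ θ, IsTestFunction θ →
      (∫ x, f x * deriv θ x) + ∫ x, k x * θ x = ∫ x, c * θ x := by
  obtain ⟨η, hη, hη1⟩ := IsTestFunction.exists_integral_eq_one
  refine ⟨(∫ x, f x * deriv η x) + ∫ x, k x * η x, fun θ hθ => ?_⟩
  obtain ⟨Φ, hΦ, hΦ'⟩ := hθ.exists_deriv_eq_sub hη hη1
  have hΦ'' : deriv (deriv Φ) = fun x => deriv θ x - (∫ y, θ y) * deriv η x := by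
    ext x
    rw [hΦ', deriv_fun_sub hθ.differentiable.differentiableAt
      (hη.differentiable.differentiableAt.const_mul _), deriv_const_mul_field]
  have hsplit {p φ ψ : ℝ → ℝ} (hp : LocallyIntegrable p) (hφ : IsTestFunction φ)
      (hψ : IsTestFunction ψ) (c : ℝ) :
      ∫ x, p x * (φ x - c * ψ x) = (∫ x, p x * φ x) - c * ∫ x, p x * ψ x := by
    rw [← integral_const_mul, ← integral_sub (hφ.integrable_mul hp)
      ((hψ.integrable_mul hp).const_mul c)]
    congr 1 with x
    ring
  have hzero := hfk Φ hΦ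
  rw [hΦ'', hΦ', hsplit hf hθ.deriv hη.deriv, hsplit hk hθ hη] at hzero
  rw [integral_const_mul]
  linarith

lemma exists_ae_eq_const_of_integral_mul_deriv_eq_zero (hf : LocallyIntegrable f)
    (h0 : ∀ φ, IsTestFunction φ → ∫ x, f x * deriv φ x = 0) : ∃ c, ∀ᵐ x, f x = c := by
  obtain ⟨c, hc⟩ := exists_integral_deriv_add_integral_eq (f := 0)
    continuous_zero.locallyIntegrable hf fun φ hφ => by simpa using h0 φ hφ
  refine ⟨c, ae_eq_of_integral_contDiff_smul_eq hf continuous_const.locallyIntegrable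
    fun θ hθ hθ' => ?_⟩
  simpa [mul_comm] using hc θ ⟨hθ, hθ'⟩

lemma exists_isAntideriv_of_integral_mul_deriv_eq (hf : LocallyIntegrable f)
    (hk : LocallyIntegrable k)
    (hfk : ∀ φ, IsTestFunction φ → ∫ x, f x * deriv φ x = -∫ x, k x * φ x) :
    ∃ F, f =ᵐ[volume] F ∧ ∀ s t, IsAntideriv F k s t := by
  have hK := IsAntideriv.of_locallyIntegrable hk 0
  have hKloc := (IsAntideriv.continuous hK).locallyIntegrable (μ := volume)
  obtain ⟨c, hc⟩ := exists_ae_eq_const_of_integral_mul_deriv_eq_zero (hf.sub hKloc) fun φ hφ => by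
    simp only [Pi.sub_apply, sub_mul]
    rw [integral_sub (hφ.deriv.integrable_mul hf) (hφ.deriv.integrable_mul hKloc), hfk φ hφ,
      IsAntideriv.integral_mul_deriv hK hφ, sub_self]
  refine ⟨fun x => c + ∫ r in (0 : ℝ)..x, k r, ?_, fun s t => (hK s t).const_add c⟩
  filter_upwards [hc] with x hx
  exact sub_eq_iff_eq_add.1 hx

lemma exists_isAntideriv_of_integral_mul_deriv_deriv_eq (hf : LocallyIntegrable f)
    (hr : LocallyIntegrable r)
    (hfr : ∀ φ, IsTestFunction φ → ∫ x, f x * deriv (deriv φ) x = ∫ x, r x * φ x) :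
    ∃ F F₁, f =ᵐ[volume] F ∧ (∀ s t, IsAntideriv F F₁ s t) ∧ ∀ s t, IsAntideriv F₁ r s t := by
  have hR := IsAntideriv.of_locallyIntegrable hr 0
  set R : ℝ → ℝ := fun x => ∫ y in (0 : ℝ)..x, r y
  have hRloc := (IsAntideriv.continuous hR).locallyIntegrable (μ := volume)
  obtain ⟨c, hc⟩ := exists_integral_deriv_add_integral_eq hf hRloc fun φ hφ => by
    rw [hfr φ hφ, IsAntideriv.integral_mul_deriv hR hφ, add_neg_cancel]
  have hF₁ (s t : ℝ) : IsAntideriv (fun x => -c + R x) r s t := (hR s t).const_add (-c)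
  obtain ⟨F, hfF, hF⟩ := exists_isAntideriv_of_integral_mul_deriv_eq hf
    ((IsAntideriv.continuous hF₁).locallyIntegrable) fun θ hθ => by
      rw [eq_neg_iff_add_eq_zero]
      have hcθ : Integrable fun x => -c * θ x := hθ.integrable.const_mul (-c)
      simp only [add_mul]
      rw [integral_add hcθ (hθ.integrable_mul hRloc), add_left_comm, hc θ hθ, integral_const_mul,
        integral_const_mul]
      ring
  exact ⟨F, _, hfF, hF, hF₁⟩

theorem exists_isSol_of_weak (hg : LocallyIntegrable g) (hh : LocallyIntegrable h)
    (hqg : LocallyIntegrable fun x => q x * g x)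
    (hw : ∀ φ, IsTestFunction φ →
      ∫ x, g x * (-(deriv (deriv φ) x) + q x * φ x) = ∫ x, h x * φ x) :
    ∃ G G₁, g =ᵐ[volume] G ∧ ∀ s t, IsSol q h s t G G₁ := by
  obtain ⟨G, G₁, hgG, hG, hG₁⟩ := exists_isAntideriv_of_integral_mul_deriv_deriv_eq hg
    (hqg.sub hh) fun φ hφ => by
      have hleft : ∫ x, g x * (-(deriv (deriv φ) x) + q x * φ x) =
          (∫ x, q x * g x * φ x) - ∫ x, g x * deriv (deriv φ) x := by
        rw [← integral_sub (hφ.integrable_mul hqg) (hφ.deriv.deriv.integrable_mul hg)]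
        congr 1 with x
        ring
      simp only [Pi.sub_apply, sub_mul]
      rw [integral_sub (hφ.integrable_mul hqg) (hφ.integrable_mul hh), ← hw φ hφ, hleft]
      ring
  refine ⟨G, G₁, hgG, fun s t => ⟨hG s t, (hG₁ s t).congr (fun _ _ => rfl) ?_⟩⟩
  filter_upwards [ae_restrict_of_ae hgG] with x hx
  rw [Pi.sub_apply, hx]

end Weak

/-! ### The a priori estimate for hyperbolic monodromy -/

section CauchySchwarz

variable {α : Type*} [MeasurableSpace α] {μ : Measure α} {f g : α → ℝ}

lemma inner_toLp_toLp (hf : MemLp f 2 μ) (hg : MemLp g 2 μ) :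
    inner ℝ (hf.toLp f) (hg.toLp g) = ∫ x, f x * g x ∂μ := by
  rw [L2.inner_def]
  refine integral_congr_ae ?_
  filter_upwards [hf.coeFn_toLp, hg.coeFn_toLp] with x hfx hgx
  simp [hfx, hgx, mul_comm]

lemma sq_integral_mul_le (hf : MemLp f 2 μ) (hg : MemLp g 2 μ) :
    (∫ x, f x * g x ∂μ) ^ 2 ≤ (∫ x, f x ^ 2 ∂μ) * ∫ x, g x ^ 2 ∂μ := by
  simpa only [inner_toLp_toLp, ← sq] using
    real_inner_mul_inner_self_le (hf.toLp f) (hg.toLp g)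

lemma sq_intervalIntegral_mul_le {f g : ℝ → ℝ} {s t : ℝ} (hst : s ≤ t)
    (hf : MemLp f 2 (volume.restrict (Ioc s t))) (hg : MemLp g 2 (volume.restrict (Ioc s t))) :
    (∫ x in s..t, f x * g x) ^ 2 ≤ (∫ x in s..t, f x ^ 2) * ∫ x in s..t, g x ^ 2 := by
  simpa only [intervalIntegral.integral_of_le hst] using sq_integral_mul_le hf hg

lemma memLp_two_restrict_Ioc {u : ℝ → ℝ} {s t : ℝ} (hu : ContinuousOn u (Icc s t)) :
    MemLp u 2 (volume.restrict (Ioc s t)) :=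
  (memLp_two_iff_integrable_sq
    ((hu.mono Ioc_subset_Icc_self).aestronglyMeasurable measurableSet_Ioc)).2
    ((hu.pow 2).integrableOn_Icc.mono_set Ioc_subset_Icc_self)

end CauchySchwarz

section Cell

variable {q h g g₁ u v u' v' ρ ρ' : ℝ → ℝ} {s t x L : ℝ}

lemma IsSol.sq_wronskian_sub_le (hg : IsSol q h s t g g₁) (hu : IsSol q 0 s t u v)
    (hh : MemLp h 2 (volume.restrict (Ioc s t))) (hx : x ∈ Icc s t) :
    (wronskian g g₁ u v x - wronskian g g₁ u v s) ^ 2 ≤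
      (∫ r in s..t, h r ^ 2) * ∫ r in s..t, u r ^ 2 := by
  have hst : s ≤ t := hx.1.trans hx.2
  have hu2 : MemLp u 2 (volume.restrict (Ioc s t)) :=
    memLp_two_restrict_Ioc (by simpa only [uIcc_of_le hst] using hu.left.continuousOn)
  have hsub : Ioc s x ⊆ Ioc s t := Ioc_subset_Ioc_right hx.2
  have hmono {f : ℝ → ℝ} (hf : MemLp f 2 (volume.restrict (Ioc s t))) :
      ∫ r in s..x, f r ^ 2 ≤ ∫ r in s..t, f r ^ 2 := by
    rw [intervalIntegral.integral_of_le hx.1, intervalIntegral.integral_of_le hst]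
    exact setIntegral_mono_set hf.integrable_sq (.of_forall fun r => sq_nonneg (f r))
      hsub.eventuallyLE
  rw [(hg.isAntideriv_wronskian hu).eq_add_integral x (by rwa [uIcc_of_le hst]),
    add_sub_cancel_left]
  calc (∫ r in s..x, h r * u r) ^ 2
      ≤ (∫ r in s..x, h r ^ 2) * ∫ r in s..x, u r ^ 2 :=
        sq_intervalIntegral_mul_le hx.1 (hh.mono_measure (Measure.restrict_mono hsub le_rfl))
          (hu2.mono_measure (Measure.restrict_mono hsub le_rfl))
    _ ≤ _ := mul_le_mul (hmono hh) (hmono hu2)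
        (intervalIntegral.integral_nonneg hx.1 fun r _ => sq_nonneg (u r))
        (intervalIntegral.integral_nonneg hst fun r _ => sq_nonneg (h r))

lemma IsSol.sq_wronskian_le (hg : IsSol q h s t g g₁) (hu : IsSol q 0 s t u v)
    (hh : MemLp h 2 (volume.restrict (Ioc s t))) (hx : x ∈ Icc s t) :
    wronskian g g₁ u v x ^ 2 ≤ 2 * (wronskian g g₁ u v s ^ 2 +
      (∫ r in s..t, h r ^ 2) * ∫ r in s..t, u r ^ 2) := by
  have hsum := add_sq_le (a := wronskian g g₁ u v s)
    (b := wronskian g g₁ u v x - wronskian g g₁ u v s)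
  rw [add_sub_cancel] at hsum
  linarith [hg.sq_wronskian_sub_le hu hh hx]

-- Integrating against a weight that vanishes at both ends moves the derivative away from `g`.
lemma integral_mul_wronskian (hρ : IsAntideriv ρ ρ' s t) (hs : ρ s = 0) (ht : ρ t = 0)
    (hg : IsAntideriv g g₁ s t) (hu : IsAntideriv u v s t) :
    ∫ x in s..t, ρ x * wronskian g g₁ u v x =
      ∫ x in s..t, (ρ' x * u x + 2 * ρ x * v x) * g x := by
  have hprod := hρ.mul (hu.mul hg)
  have hW : IntervalIntegrable (fun x => ρ x * wronskian g g₁ u v x) volume s t :=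
    ((hu.intervalIntegrable.continuousOn_mul hg.continuousOn).sub
      (hg.intervalIntegrable.mul_continuousOn hu.continuousOn)).continuousOn_mul hρ.continuousOn
  have hzero := hprod.right_eq
  simp only [hs, ht, zero_mul, zero_add] at hzero
  rw [← add_zero (∫ x in s..t, ρ x * wronskian g g₁ u v x), hzero,
    ← intervalIntegral.integral_add hW hprod.intervalIntegrable]
  congr 1 with x
  simp only [wronskian]
  ring

lemma IsSol.integral_sq_wronskian_sub_le (hst : s ≤ t) (hg : IsSol q h s t g g₁)
    (hu : IsSol q 0 s t u v) (hh : MemLp h 2 (volume.restrict (Ioc s t))) :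
    ∫ x in s..t, (wronskian g g₁ u v x - wronskian g g₁ u v s) ^ 2 ≤
      (t - s) * ((∫ r in s..t, h r ^ 2) * ∫ r in s..t, u r ^ 2) := by
  rw [← smul_eq_mul, ← intervalIntegral.integral_const]
  exact intervalIntegral.integral_mono_on hst
    (((hg.isAntideriv_wronskian hu).continuousOn.sub continuousOn_const).pow 2).intervalIntegrable
    intervalIntegrable_const fun x hx => hg.sq_wronskian_sub_le hu hh hx

lemma IsSol.sq_mul_sq_wronskian_le (hst : s ≤ t) (hρ : IsAntideriv ρ ρ' s t)
    (hρ' : ContinuousOn ρ' (Icc s t)) (hs : ρ s = 0) (ht : ρ t = 0) (hg : IsSol q h s t g g₁)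
    (hu : IsSol q 0 s t u v) (hh : MemLp h 2 (volume.restrict (Ioc s t))) :
    ((∫ x in s..t, ρ x) * wronskian g g₁ u v s) ^ 2 ≤
      2 * ((∫ x in s..t, (ρ' x * u x + 2 * ρ x * v x) ^ 2) * ∫ x in s..t, g x ^ 2) +
      2 * ((∫ x in s..t, ρ x ^ 2) *
        ((t - s) * ((∫ x in s..t, h x ^ 2) * ∫ x in s..t, u x ^ 2))) := by
  rw [← uIcc_of_le hst] at hρ'
  have hρc := hρ.continuousOn
  have hgc := hg.left.continuousOn
  have huc := hu.left.continuousOn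
  have hvc := hu.right.continuousOn
  have hWc := (hg.isAntideriv_wronskian hu).continuousOn
  set W := wronskian g g₁ u v
  have hcs {f₁ f₂ : ℝ → ℝ} (hf₁ : ContinuousOn f₁ (uIcc s t)) (hf₂ : ContinuousOn f₂ (uIcc s t)) :
      (∫ x in s..t, f₁ x * f₂ x) ^ 2 ≤ (∫ x in s..t, f₁ x ^ 2) * ∫ x in s..t, f₂ x ^ 2 :=
    sq_intervalIntegral_mul_le hst (memLp_two_restrict_Ioc (uIcc_of_le hst ▸ hf₁))
      (memLp_two_restrict_Ioc (uIcc_of_le hst ▸ hf₂))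
  have hsplit : (∫ x in s..t, ρ x) * W s =
      (∫ x in s..t, (ρ' x * u x + 2 * ρ x * v x) * g x) - ∫ x in s..t, ρ x * (W x - W s) := by
    rw [← integral_mul_wronskian hρ hs ht hg.left hu.left]
    change _ = (∫ x in s..t, ρ x * W x) - _
    rw [← intervalIntegral.integral_mul_const,
      ← intervalIntegral.integral_sub (ContinuousOn.intervalIntegrable (by fun_prop))
        (ContinuousOn.intervalIntegrable (by fun_prop))]
    congr 1 with x
    ring
  have hfirst := hcs (f₁ := fun x => ρ' x * u x + 2 * ρ x * v x) (by fun_prop) hgc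
  have hsecond := hcs (f₂ := fun x => W x - W s) hρc (by fun_prop)
  have hρ2 : 0 ≤ ∫ x in s..t, ρ x ^ 2 :=
    intervalIntegral.integral_nonneg hst fun x _ => sq_nonneg (ρ x)
  have hosc := hsecond.trans (mul_le_mul_of_nonneg_left
    (hg.integral_sq_wronskian_sub_le hst hu hh) hρ2)
  rw [hsplit, sub_eq_add_neg]
  refine add_sq_le.trans ?_
  rw [neg_sq]
  linarith

lemma exists_sq_wronskian_le (hL : 0 < L) (hu : IsSol q 0 0 L u v) :
    ∃ C, ∀ g g₁ h, IsSol q h 0 L g g₁ → MemLp h 2 (volume.restrict (Ioc 0 L)) →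
      wronskian g g₁ u v 0 ^ 2 ≤ C * ((∫ x in 0..L, g x ^ 2) + ∫ x in 0..L, h x ^ 2) := by
  have hρ : IsAntideriv (fun x => x * (L - x)) (fun x => L - 2 * x) 0 L := by
    refine .of_hasDerivAt (fun x _ => ?_)
      (Continuous.intervalIntegrable (by fun_prop) _ _)
    exact ((hasDerivAt_id x).mul ((hasDerivAt_id x).const_sub L)).congr_deriv
      (by simp only [id_eq]; ring)
  set S := ∫ x in 0..L, x * (L - x)
  set A := ∫ x in 0..L, ((L - 2 * x) * u x + 2 * (x * (L - x)) * v x) ^ 2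
  set B := (∫ x in 0..L, (x * (L - x)) ^ 2) * (L * ∫ x in 0..L, u x ^ 2)
  have hS : 0 < S := intervalIntegral.intervalIntegral_pos_of_pos_on
    hρ.continuousOn.intervalIntegrable (fun x hx => mul_pos hx.1 (sub_pos.2 hx.2)) hL
  have hnonneg {f : ℝ → ℝ} : 0 ≤ ∫ x in 0..L, f x ^ 2 :=
    intervalIntegral.integral_nonneg hL.le fun x _ => sq_nonneg (f x)
  have hA : 0 ≤ A := hnonneg
  have hB : 0 ≤ B := mul_nonneg hnonneg (mul_nonneg hL.le hnonneg)
  refine ⟨2 * (A + B) / S ^ 2, fun g g₁ h hg hh => ?_⟩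
  have hmain := hg.sq_mul_sq_wronskian_le hL.le hρ
    (Continuous.continuousOn (by fun_prop)) (by simp) (by simp) hu hh
  rw [div_mul_eq_mul_div, le_div_iff₀ (by positivity)]
  rw [sub_zero, mul_pow] at hmain
  have hAh : 0 ≤ A * ∫ x in 0..L, h x ^ 2 := mul_nonneg hA hnonneg
  have hBg : 0 ≤ B * ∫ x in 0..L, g x ^ 2 := mul_nonneg hB hnonneg
  linarith

lemma IsSol.sq_wronskian_mul_integral_sq_le (hst : s ≤ t) (hg : IsSol q h s t g g₁)
    (hu : IsSol q 0 s t u v) (hu' : IsSol q 0 s t u' v')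
    (hh : MemLp h 2 (volume.restrict (Ioc s t))) :
    wronskian u v u' v' s ^ 2 * ∫ x in s..t, g x ^ 2 ≤
      4 * ((∫ x in s..t, u x ^ 2) * (wronskian g g₁ u' v' s ^ 2 +
          (∫ x in s..t, h x ^ 2) * ∫ x in s..t, u' x ^ 2) +
        (∫ x in s..t, u' x ^ 2) * (wronskian g g₁ u v s ^ 2 +
          (∫ x in s..t, h x ^ 2) * ∫ x in s..t, u x ^ 2)) := by
  have huc := hu.left.continuousOn
  have huc' := hu'.left.continuousOn
  set H := ∫ x in s..t, h x ^ 2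
  set U := ∫ x in s..t, u x ^ 2
  set U' := ∫ x in s..t, u' x ^ 2
  set W := wronskian g g₁ u v with hW_def
  set W' := wronskian g g₁ u' v' with hW'_def
  set w := wronskian u v u' v' with hw_def
  have hpoint : ∀ x ∈ Icc s t, w s ^ 2 * g x ^ 2 ≤
      4 * (u x ^ 2 * (W' s ^ 2 + H * U') + u' x ^ 2 * (W s ^ 2 + H * U)) := fun x hx => by
    have hconst : w x = w s := by
      simpa using (hu.isAntideriv_wronskian hu').eq_add_integral x (by rwa [uIcc_of_le hst])
    have hrecover : w s * g x = u x * W' x - u' x * W x := by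
      rw [← hconst]
      simp only [hw_def, hW_def, hW'_def, wronskian]
      ring
    have hW := hg.sq_wronskian_le hu hh hx
    have hW' := hg.sq_wronskian_le hu' hh hx
    calc w s ^ 2 * g x ^ 2 = (u x * W' x + -(u' x * W x)) ^ 2 := by
          rw [← mul_pow, hrecover, sub_eq_add_neg]
      _ ≤ 2 * (u x ^ 2 * W' x ^ 2 + u' x ^ 2 * W x ^ 2) := by
          simpa only [neg_sq, mul_pow] using add_sq_le (a := u x * W' x) (b := -(u' x * W x))
      _ ≤ 2 * (u x ^ 2 * (2 * (W' s ^ 2 + H * U')) + u' x ^ 2 * (2 * (W s ^ 2 + H * U))) := by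
          gcongr
      _ = _ := by ring
  have hmono := intervalIntegral.integral_mono_on (μ := volume) hst
    (((hg.left.continuousOn.pow 2).const_mul _).intervalIntegrable)
    (ContinuousOn.intervalIntegrable (by fun_prop)) hpoint
  rwa [intervalIntegral.integral_const_mul, intervalIntegral.integral_const_mul,
    intervalIntegral.integral_add (ContinuousOn.intervalIntegrable (by fun_prop))
      (ContinuousOn.intervalIntegrable (by fun_prop)), intervalIntegral.integral_mul_const,
    intervalIntegral.integral_mul_const] at hmono

end Cell

section Floquet

open scoped Matrix.Norms.Operator

variable {q h g g₁ u v u' v' : ℝ → ℝ} {L ν : ℝ} {P : Matrix (Fin 2) (Fin 2) ℝ}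

lemma sq_one_sub_abs_mul_tsum_sq_le {z f : ℤ → ℝ} (hz : Summable fun n => z n ^ 2)
    (hf : Summable fun n => f n ^ 2) (hrec : ∀ n, ν * z (n + 1) = z n + f n) :
    (1 - |ν|) ^ 2 * ∑' n, z n ^ 2 ≤ ∑' n, f n ^ 2 := by
  have hz_succ : Summable fun n : ℤ => z (n + 1) ^ 2 :=
    (Equiv.addRight (1 : ℤ)).summable_iff (f := fun n => z n ^ 2) |>.2 hz
  have hshift : ∑' n : ℤ, z (n + 1) ^ 2 = ∑' n, z n ^ 2 :=
    (Equiv.addRight (1 : ℤ)).tsum_eq (fun n => z n ^ 2)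
  have hterm (n : ℤ) : (|ν| ^ 2 - |ν|) * z (n + 1) ^ 2 + (1 - |ν|) * z n ^ 2 ≤ f n ^ 2 := by
    have hf_eq : f n = ν * z (n + 1) - z n := by linarith [hrec n]
    have hcross := (le_abs_self (ν * (z (n + 1) * z n))).trans_eq (abs_mul _ _)
    have hamgm : |z (n + 1) * z n| ≤ (z (n + 1) ^ 2 + z n ^ 2) / 2 := by
      rw [abs_mul]
      nlinarith only [sq_nonneg (|z (n + 1)| - |z n|), sq_abs (z (n + 1)), sq_abs (z n)]
    rw [hf_eq, sq_abs]
    nlinarith only [hcross, mul_le_mul_of_nonneg_left hamgm (abs_nonneg ν)]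
  calc (1 - |ν|) ^ 2 * ∑' n, z n ^ 2
      = ∑' n : ℤ, ((|ν| ^ 2 - |ν|) * z (n + 1) ^ 2 + (1 - |ν|) * z n ^ 2) := by
        rw [(hz_succ.mul_left _).tsum_add (hz.mul_left _), tsum_mul_left, tsum_mul_left, hshift]
        ring
    _ ≤ ∑' n, f n ^ 2 := ((hz_succ.mul_left _).add (hz.mul_left _)).tsum_le_tsum hterm hf

lemma hasSum_intervalIntegral_comp_add_int_mul {F : ℝ → ℝ} (hL : 0 < L) (hF : Integrable F) :
    HasSum (fun n : ℤ => ∫ x in 0..L, F (x + n * L)) (∫ x, F x) := by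
  have hscaled := ((hF.comp_mul_left' hL.ne').hasSum_intervalIntegral_comp_add_int).mul_left L
  rw [Measure.integral_comp_mul_left, abs_of_pos (inv_pos.2 hL), smul_eq_mul,
    mul_inv_cancel_left₀ hL.ne'] at hscaled
  refine hscaled.congr_fun fun n => ?_
  simp only [mul_add]
  rw [← smul_eq_mul L, intervalIntegral.smul_integral_comp_mul_add,
    intervalIntegral.integral_comp_add_right]
  simp [mul_comm]

/-- A Floquet solution with multiplier `ν` of `-u'' + q u = 0`, where `q` has period `L`. -/
structure IsFloquet (q : ℝ → ℝ) (L ν : ℝ) (u v : ℝ → ℝ) : Prop where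
  isSol : IsSol q 0 0 L u v
  left : u L = ν * u 0
  right : v L = ν * v 0

lemma exists_eigenvectors_of_isHyperbolic (hdet : P.det = 1) (hP : P.IsHyperbolic) :
    ∃ (ν : Fin 2 → ℝ) (z : Fin 2 → Fin 2 → ℝ), (∀ i, |ν i| ≠ 1) ∧
      (∀ i, P *ᵥ z i = ν i • z i) ∧ LinearIndependent ℝ z := by
  rw [isHyperbolic_iff_four_lt_trace_sq hdet] at hP
  set r := √(P.trace ^ 2 - 4)
  have hr : 0 < r := Real.sqrt_pos.2 (sub_pos.2 hP)
  have hr_sq : r ^ 2 = P.trace ^ 2 - 4 := Real.sq_sqrt (sub_pos.2 hP).le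
  set ν : Fin 2 → ℝ := ![(P.trace + r) / 2, (P.trace - r) / 2]
  have hroot (i : Fin 2) : ν i ^ 2 - P.trace * ν i + 1 = 0 := by
    fin_cases i <;> simp only [ν, Fin.zero_eta, Fin.mk_one, Matrix.cons_val] <;> linarith
  have habs (i : Fin 2) : |ν i| ≠ 1 := fun habs => by
    have hsq : ν i ^ 2 = 1 := by rw [← sq_abs, habs, one_pow]
    have htr : (P.trace * ν i) ^ 2 = 4 := by
      rw [show P.trace * ν i = 2 by linarith [hroot i]]
      norm_num
    rw [mul_pow, hsq] at htr
    linarith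
  have hinj : Function.Injective ν := by
    rw [Function.Injective, Fin.forall_fin_two]
    simp only [ν, Fin.forall_fin_two, Matrix.cons_val]
    refine ⟨⟨by simp, fun h => ?_⟩, fun h => ?_, by simp⟩ <;> linarith
  have heigen (i : Fin 2) : Module.End.HasEigenvalue (Matrix.toLin' P) (ν i) := by
    rw [Module.End.hasEigenvalue_iff_isRoot_charpoly, Matrix.charpoly_toLin',
      Matrix.charpoly_fin_two, hdet]
    simpa using hroot i
  choose z hz using fun i => (heigen i).exists_hasEigenvector
  exact ⟨ν, z, habs, fun i => (hz i).apply_eq_smul,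
    Module.End.eigenvectors_linearIndependent' _ ν hinj z hz⟩

lemma exists_isFloquet_of_isHyperbolic (hP : IsPropagator (schrodingerMatrix q) 0 L P)
    (hyp : P.IsHyperbolic) :
    ∃ ν u v ν' u' v', |ν| ≠ 1 ∧ |ν'| ≠ 1 ∧ IsFloquet q L ν u v ∧ IsFloquet q L ν' u' v' ∧
      wronskian u v u' v' 0 ≠ 0 := by
  obtain ⟨ν, z, hν, hz, hindep⟩ := exists_eigenvectors_of_isHyperbolic hP.det_eq_one hyp
  choose u v hsol h0 hL using fun i => hP.exists_isSol (z i)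
  have hfloquet (i : Fin 2) : IsFloquet q L (ν i) (u i) (v i) := by
    have hmult : ![u i L, v i L] = ν i • ![u i 0, v i 0] := by rw [hL, h0, hz]
    exact ⟨hsol i, congrFun hmult 0, congrFun hmult 1⟩
  refine ⟨_, _, _, _, _, _, hν 0, hν 1, hfloquet 0, hfloquet 1, ?_⟩
  have hdet := (Matrix.isUnit_iff_isUnit_det _).1
    (Matrix.linearIndependent_rows_iff_isUnit (A := Matrix.of z).1 hindep)
  rw [Matrix.det_fin_two, isUnit_iff_ne_zero] at hdet
  simpa [wronskian, ← h0] using hdet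

/-- The value at the left end of the `n`-th cell of length `L` of the Wronskian of `(g, g₁)` with
the copy of `(u, v)` on that cell. -/
def cellWronskian (g g₁ u v : ℝ → ℝ) (L : ℝ) (n : ℤ) : ℝ :=
  wronskian (fun x => g (x + n * L)) (fun x => g₁ (x + n * L)) u v 0

lemma memLp_comp_add_right {f : ℝ → ℝ} (hf : MemLp f 2) (c : ℝ) :
    MemLp (fun x => f (x + c)) 2 :=
  hf.comp_measurePreserving (measurePreserving_add_right volume c)

lemma IsSol.comp_add_int_mul (hq : Function.Periodic q L) (hg : ∀ s t, IsSol q h s t g g₁)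
    (n : ℤ) : IsSol q (fun x => h (x + n * L)) 0 L (fun x => g (x + n * L))
      (fun x => g₁ (x + n * L)) := by
  simpa only [hq.int_mul n _] using (hg _ _).comp_add_right (s := 0) (t := L) (c := n * L)

lemma IsFloquet.summable_sq_cellWronskian (hu : IsFloquet q L ν u v) (hL : 0 < L)
    (hq : Function.Periodic q L) (hsol : ∀ s t, IsSol q h s t g g₁) (hg : MemLp g 2)
    (hh : MemLp h 2) : Summable fun n => cellWronskian g g₁ u v L n ^ 2 := by
  obtain ⟨C, hC⟩ := exists_sq_wronskian_le hL hu.isSol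
  refine .of_nonneg_of_le (fun n => sq_nonneg _)
    (fun n => hC _ _ _ (.comp_add_int_mul hq hsol n) ((memLp_comp_add_right hh _).restrict _)) ?_
  exact ((hasSum_intervalIntegral_comp_add_int_mul hL hg.integrable_sq).add
    (hasSum_intervalIntegral_comp_add_int_mul hL hh.integrable_sq)).summable.mul_left C

lemma IsFloquet.tsum_sq_cellWronskian_le (hu : IsFloquet q L ν u v) (hL : 0 < L)
    (hq : Function.Periodic q L) (hsol : ∀ s t, IsSol q h s t g g₁) (hg : MemLp g 2)
    (hh : MemLp h 2) (hν : |ν| ≠ 1) :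
    ∑' n, cellWronskian g g₁ u v L n ^ 2 ≤
      (∫ x in 0..L, u x ^ 2) / (1 - |ν|) ^ 2 * ∫ x, h x ^ 2 := by
  have hcells := (hasSum_intervalIntegral_comp_add_int_mul hL hh.integrable_sq).mul_right
    (∫ x in 0..L, u x ^ 2)
  have hstep (n : ℤ) : (ν * cellWronskian g g₁ u v L (n + 1) - cellWronskian g g₁ u v L n) ^ 2 ≤
      (∫ x in 0..L, h (x + n * L) ^ 2) * ∫ x in 0..L, u x ^ 2 := by
    have hright : wronskian (fun x => g (x + n * L)) (fun x => g₁ (x + n * L)) u v L =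
        ν * cellWronskian g g₁ u v L (n + 1) := by
      simp only [cellWronskian, wronskian, hu.left, hu.right, Int.cast_add, Int.cast_one, zero_add,
        add_mul, one_mul, add_comm L]
      ring
    rw [← hright]
    exact (IsSol.comp_add_int_mul hq hsol n).sq_wronskian_sub_le hu.isSol
      ((memLp_comp_add_right hh _).restrict _) (right_mem_Icc.2 hL.le)
  have hsum := Summable.of_nonneg_of_le (fun n => sq_nonneg _) hstep hcells.summable
  rw [div_mul_eq_mul_div, le_div_iff₀' (sq_pos_of_ne_zero (sub_ne_zero.2 hν.symm)),
    mul_comm (∫ x in 0..L, u x ^ 2)]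
  calc (1 - |ν|) ^ 2 * ∑' n, cellWronskian g g₁ u v L n ^ 2
      ≤ ∑' n, (ν * cellWronskian g g₁ u v L (n + 1) - cellWronskian g g₁ u v L n) ^ 2 :=
        sq_one_sub_abs_mul_tsum_sq_le (hu.summable_sq_cellWronskian hL hq hsol hg hh) hsum
          fun n => by ring
    _ ≤ _ := hcells.tsum_eq ▸ hsum.tsum_le_tsum hstep hcells.summable

theorem exists_integral_sq_le_of_isHyperbolic (hL : 0 < L) (hq : Function.Periodic q L)
    (hP : IsPropagator (schrodingerMatrix q) 0 L P) (hyp : P.IsHyperbolic) :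
    ∃ C, ∀ g g₁ h, (∀ s t, IsSol q h s t g g₁) → MemLp g 2 → MemLp h 2 →
      ∫ x, g x ^ 2 ≤ C * ∫ x, h x ^ 2 := by
  obtain ⟨ν, u, v, ν', u', v', hν, hν', hu, hu', hw⟩ := exists_isFloquet_of_isHyperbolic hP hyp
  set w := wronskian u v u' v' 0
  set U := ∫ x in 0..L, u x ^ 2
  set U' := ∫ x in 0..L, u' x ^ 2
  have hU : 0 ≤ U := intervalIntegral.integral_nonneg hL.le fun x _ => sq_nonneg (u x)
  have hU' : 0 ≤ U' := intervalIntegral.integral_nonneg hL.le fun x _ => sq_nonneg (u' x)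
  refine ⟨4 * (U * (U' / (1 - |ν'|) ^ 2 + U') + U' * (U / (1 - |ν|) ^ 2 + U)) / w ^ 2,
    fun g g₁ h hsol hg hh => ?_⟩
  have hsum := hu.summable_sq_cellWronskian hL hq hsol hg hh
  have hsum' := hu'.summable_sq_cellWronskian hL hq hsol hg hh
  have hle := hu.tsum_sq_cellWronskian_le hL hq hsol hg hh hν
  have hle' := hu'.tsum_sq_cellWronskian_le hL hq hsol hg hh hν'
  have hgsum := hasSum_intervalIntegral_comp_add_int_mul hL hg.integrable_sq
  have hhsum := hasSum_intervalIntegral_comp_add_int_mul hL hh.integrable_sq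
  have hcells := hasSum_le
    (fun n => (IsSol.comp_add_int_mul hq hsol n).sq_wronskian_mul_integral_sq_le hL.le hu.isSol
      hu'.isSol ((memLp_comp_add_right hh _).restrict _))
    (hgsum.mul_left (w ^ 2))
    ((((hsum'.hasSum.add (hhsum.mul_right U')).mul_left U).add
      ((hsum.hasSum.add (hhsum.mul_right U)).mul_left U')).mul_left 4)
  set H := ∫ x, h x ^ 2
  rw [div_mul_eq_mul_div, le_div_iff₀' (by positivity)]
  calc w ^ 2 * ∫ x, g x ^ 2 ≤ _ := hcells
    _ ≤ 4 * (U * (U' / (1 - |ν'|) ^ 2 * H + H * U') + U' * (U / (1 - |ν|) ^ 2 * H + H * U)) := by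
        gcongr
    _ = _ := by ring

end Floquet

/-! ### The spectrum -/

section ClosedGraph

variable {𝕜 E F : Type*} [NontriviallyNormedField 𝕜]
  [NormedAddCommGroup E] [NormedSpace 𝕜 E] [CompleteSpace E]
  [NormedAddCommGroup F] [NormedSpace 𝕜 F] [CompleteSpace F]

lemma exists_continuousLinearMap_of_isClosed_of_dense {Γ : Submodule 𝕜 (E × F)} {C : ℝ}
    (hclosed : IsClosed (Γ : Set (E × F))) (hbound : ∀ p ∈ Γ, ‖p.2‖ ≤ C * ‖p.1‖)
    (hdense : Dense (Prod.fst '' (Γ : Set (E × F)))) :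
    ∃ T : E →L[𝕜] F, ∀ p, p ∈ Γ ↔ T p.1 = p.2 := by
  have : CompleteSpace Γ := hclosed.completeSpace_coe
  let fst : Γ →L[𝕜] E := (ContinuousLinearMap.fst 𝕜 E F).comp Γ.subtypeL
  have hanti : AntilipschitzWith (max 1 C).toNNReal fst :=
    fst.antilipschitz_of_bound fun p => by
      rw [Real.coe_toNNReal _ (le_max_of_le_left zero_le_one), Submodule.coe_norm, Prod.norm_def]
      refine max_le (le_mul_of_one_le_left (norm_nonneg _) (le_max_left _ _)) ?_
      exact (hbound p p.2).trans (mul_le_mul_of_nonneg_right (le_max_right _ _) (norm_nonneg _))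
  have hrange : Set.range fst = univ := by
    rw [← (hanti.isClosed_range fst.uniformContinuous).closure_eq, ← hdense.closure_eq,
      Set.image_eq_range]
    rfl
  let e : Γ ≃L[𝕜] E := .ofBijective fst (LinearMap.ker_eq_bot.2 hanti.injective)
    (LinearMap.range_eq_top.2 (Set.range_eq_univ.1 hrange))
  have he (x : E) : (e.symm x).1.1 = x := e.apply_symm_apply x
  refine ⟨((ContinuousLinearMap.snd 𝕜 E F).comp Γ.subtypeL).comp (e.symm : E →L[𝕜] Γ),
    fun p => ⟨fun hp => ?_, fun hp => ?_⟩⟩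
  · exact congrArg (fun r : Γ => r.1.2) (e.symm_apply_apply ⟨p, hp⟩)
  · have hpe : (e.symm p.1).1 = p := Prod.ext (he p.1) hp
    exact hpe ▸ (e.symm p.1).2

end ClosedGraph

section Spectrum

open scoped Matrix.Norms.Operator

variable {V f g q φ θ : ℝ → ℝ} {E : ℝ}

/-- Locally square integrable functions, the potentials for which `-φ'' + Vφ` is in `L²` whenever
`φ` is a test function. -/
def IsL2Loc (V : ℝ → ℝ) : Prop := ∀ K : Set ℝ, IsCompact K → MemLp V 2 (volume.restrict K)

namespace IsL2Loc

lemma of_memLp (hg : MemLp g 2) : IsL2Loc g := fun _ _ => hg.restrict _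

lemma sub_const (hV : IsL2Loc V) (E : ℝ) : IsL2Loc fun x => V x - E := fun K hK =>
  have : Fact (volume K < ⊤) := ⟨hK.measure_lt_top⟩
  (hV K hK).sub (memLp_const E)

lemma mul (hf : IsL2Loc f) (hg : IsL2Loc g) : LocallyIntegrable fun x => f x * g x :=
  locallyIntegrable_iff.2 fun K hK => (hf K hK).integrable_mul (hg K hK)

lemma locallyIntegrable (hf : IsL2Loc f) : LocallyIntegrable f :=
  locallyIntegrable_iff.2 fun K hK =>
    have : Fact (volume K < ⊤) := ⟨hK.measure_lt_top⟩
    (hf K hK).integrable one_le_two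

lemma intervalIntegrable (hf : IsL2Loc f) (s t : ℝ) : IntervalIntegrable f volume s t :=
  (hf.locallyIntegrable.integrableOn_isCompact isCompact_uIcc).intervalIntegrable

end IsL2Loc

/-- The Schrödinger operator `-d²/dx² + q`, applied to a twice differentiable function. -/
def schrodinger (q φ : ℝ → ℝ) (x : ℝ) : ℝ := -(deriv (deriv φ) x) + q x * φ x

namespace IsTestFunction

lemma memLp (hφ : IsTestFunction φ) : MemLp φ 2 :=
  hφ.continuous.memLp_of_hasCompactSupport hφ.hasCompactSupport

lemma memLp_mul (hφ : IsTestFunction φ) (hq : IsL2Loc q) : MemLp (fun x => q x * φ x) 2 := by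
  have hqφ : MemLp (fun x => q x * φ x) 2 (volume.restrict (tsupport φ)) :=
    (hφ.continuous.memLp_top_of_hasCompactSupport hφ.hasCompactSupport _).mul
      (hq _ hφ.hasCompactSupport)
  refine (memLp_indicator_iff_restrict (isClosed_tsupport φ).measurableSet).2 hqφ |>.ae_eq
    (.of_forall fun x => ?_)
  refine congrFun (indicator_eq_self.2 ?_) x
  exact (Function.support_mul_subset_right _ _).trans (subset_tsupport φ)

lemma memLp_schrodinger (hφ : IsTestFunction φ) (hq : IsL2Loc q) : MemLp (schrodinger q φ) 2 :=
  hφ.deriv.deriv.memLp.neg.add (hφ.memLp_mul hq)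

lemma integral_mul_deriv_deriv (hφ : IsTestFunction φ) (hθ : IsTestFunction θ) :
    ∫ x, φ x * deriv (deriv θ) x = ∫ x, deriv (deriv φ) x * θ x := by
  have hderiv {φ : ℝ → ℝ} (hφ : IsTestFunction φ) (s t : ℝ) :
      IsAntideriv φ (deriv φ) s t :=
    .of_hasDerivAt (fun x _ => hφ.differentiable.differentiableAt.hasDerivAt)
      (hφ.deriv.continuous.intervalIntegrable _ _)
  rw [IsAntideriv.integral_mul_deriv (hderiv hφ) hθ.deriv,
    IsAntideriv.integral_mul_deriv (hderiv hφ.deriv) hθ, neg_neg]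

lemma integral_mul_schrodinger (hφ : IsTestFunction φ) (hθ : IsTestFunction θ) (hq : IsL2Loc q) :
    ∫ x, φ x * schrodinger q θ x = ∫ x, schrodinger q φ x * θ x := by
  have hpot : Integrable fun x => q x * φ x * θ x :=
    hθ.integrable_mul (IsL2Loc.of_memLp (hφ.memLp_mul hq)).locallyIntegrable
  have hleft : Integrable fun x => φ x * deriv (deriv θ) x :=
    hθ.deriv.deriv.integrable_mul hφ.continuous.locallyIntegrable
  have hright : Integrable fun x => deriv (deriv φ) x * θ x :=
    hθ.integrable_mul hφ.deriv.deriv.continuous.locallyIntegrable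
  calc ∫ x, φ x * schrodinger q θ x
      = ∫ x, (q x * φ x * θ x - φ x * deriv (deriv θ) x) := by
        congr 1 with x; rw [schrodinger]; ring
    _ = ∫ x, (q x * φ x * θ x - deriv (deriv φ) x * θ x) := by
        rw [integral_sub hpot hleft, integral_sub hpot hright, hφ.integral_mul_deriv_deriv hθ]
    _ = ∫ x, schrodinger q φ x * θ x := by
        congr 1 with x; rw [schrodinger]; ring

end IsTestFunction

lemma weakSchrodingerEq_iff_inner (hV : IsL2Loc V) {g h : L2R} :
    WeakSchrodingerEq V E g h ↔ ∀ φ (hφ : IsTestFunction φ),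
      inner ℝ ((hφ.memLp_schrodinger (hV.sub_const E)).toLp _) g
        = inner ℝ (hφ.memLp.toLp φ) h := by
  have hinner {f : ℝ → ℝ} (hf : MemLp f 2) (g : L2R) :
      inner ℝ (hf.toLp f) g = ∫ x, g x * f x := by
    simpa only [Lp.toLp_coeFn, real_inner_comm] using inner_toLp_toLp (Lp.memLp g) hf
  simp only [hinner]
  exact ⟨fun H φ hφ => H φ hφ.1 hφ.2, fun H φ h₁ h₂ => H φ ⟨h₁, h₂⟩⟩

/-- The graph of the inverse of the maximal operator `L_V - E` on `L²(ℝ)`: the pairs `(h, g)` such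
that `(L_V - E) g = h` weakly. -/
def weakInverseGraph (hV : IsL2Loc V) (E : ℝ) : Submodule ℝ (L2R × L2R) :=
  ⨅ φ : {φ : ℝ → ℝ // IsTestFunction φ},
    (((innerSL ℝ ((φ.2.memLp_schrodinger (hV.sub_const E)).toLp _)).comp
        (ContinuousLinearMap.snd ℝ L2R L2R)
      - (innerSL ℝ (φ.2.memLp.toLp φ.1)).comp (ContinuousLinearMap.fst ℝ L2R L2R)).ker)

lemma mem_weakInverseGraph (hV : IsL2Loc V) {p : L2R × L2R} :
    p ∈ weakInverseGraph hV E ↔ WeakSchrodingerEq V E p.2 p.1 := by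
  simp [weakInverseGraph, weakSchrodingerEq_iff_inner hV, sub_eq_zero]

lemma isClosed_weakInverseGraph (hV : IsL2Loc V) (E : ℝ) :
    IsClosed (weakInverseGraph hV E : Set (L2R × L2R)) := by
  rw [weakInverseGraph, Submodule.coe_iInf]
  exact isClosed_iInter fun φ => ContinuousLinearMap.isClosed_ker _

lemma IsTestFunction.toLp_mem_weakInverseGraph (hφ : IsTestFunction φ) (hV : IsL2Loc V) :
    ((hφ.memLp_schrodinger (hV.sub_const E)).toLp _, hφ.memLp.toLp φ)
      ∈ weakInverseGraph hV E := by
  refine (mem_weakInverseGraph hV).2 ((weakSchrodingerEq_iff_inner hV).2 fun θ hθ => ?_)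
  rw [inner_toLp_toLp, inner_toLp_toLp, hθ.integral_mul_schrodinger hφ (hV.sub_const E)]

/-- The orthogonal complement of the range of `L_V - E` consists of weak solutions of
`(L_V - E) g = 0`. -/
lemma dense_fst_weakInverseGraph (hV : IsL2Loc V)
    (hker : ∀ g : L2R, WeakSchrodingerEq V E g 0 → g = 0) :
    Dense (Prod.fst '' (weakInverseGraph hV E : Set (L2R × L2R))) := by
  change Dense (((weakInverseGraph hV E).map (LinearMap.fst ℝ L2R L2R) : Submodule ℝ L2R) : Set L2R)
  rw [Submodule.dense_iff_topologicalClosure_eq_top,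
    Submodule.topologicalClosure_eq_top_iff, Submodule.eq_bot_iff]
  refine fun g hg => hker g ((weakSchrodingerEq_iff_inner hV).2 fun φ hφ => ?_)
  rw [inner_zero_right]
  exact (Submodule.mem_orthogonal _ _).1 hg _ ⟨_, hφ.toLp_mem_weakInverseGraph hV, rfl⟩

theorem notMem_contSpectrum_of_norm_le {C : ℝ} (hV : IsL2Loc V)
    (hbound : ∀ g h : L2R, WeakSchrodingerEq V E g h → ‖g‖ ≤ C * ‖h‖) : E ∉ ContSpectrum V := by
  have hker (g : L2R) (hg : WeakSchrodingerEq V E g 0) : g = 0 := by simpa using hbound g 0 hg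
  obtain ⟨T, hT⟩ := exists_continuousLinearMap_of_isClosed_of_dense
    (isClosed_weakInverseGraph hV E)
    (fun p hp => hbound p.2 p.1 ((mem_weakInverseGraph hV).1 hp))
    (dense_fst_weakInverseGraph hV hker)
  exact fun hE => hE ⟨T, fun f => (mem_weakInverseGraph hV (p := (f, T f))).1 ((hT _).2 rfl),
    fun g h hw => (hT (h, g)).1 ((mem_weakInverseGraph hV).2 hw)⟩

theorem notMem_contSpectrum_of_isHyperbolic {L : ℝ} (hL : 0 < L) (hV : IsL2Loc V)
    (hper : Function.Periodic V L) {P : Matrix (Fin 2) (Fin 2) ℝ}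
    (hP : IsPropagator (schrodingerMatrix fun x => V x - E) 0 L P) (hyp : P.IsHyperbolic) :
    E ∉ ContSpectrum V := by
  obtain ⟨C, hC⟩ := exists_integral_sq_le_of_isHyperbolic hL
    (fun x => by simp only [hper x]) hP hyp
  refine notMem_contSpectrum_of_norm_le (C := √C) hV fun g h hw => ?_
  have hnorm (f : L2R) : ‖f‖ ^ 2 = ∫ x, f x ^ 2 := by
    rw [← real_inner_self_eq_norm_sq]
    simpa only [Lp.toLp_coeFn, sq] using inner_toLp_toLp (Lp.memLp f) (Lp.memLp f)
  have hloc (f : L2R) : IsL2Loc f := .of_memLp (Lp.memLp f)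
  obtain ⟨G, G₁, hgG, hG⟩ := exists_isSol_of_weak (hloc g).locallyIntegrable
    (hloc h).locallyIntegrable ((hV.sub_const E).mul (hloc g)) fun φ hφ => hw φ hφ.1 hφ.2
  have hsq : ‖g‖ ^ 2 ≤ C * ‖h‖ ^ 2 := by
    rw [hnorm, hnorm, integral_congr_ae (hgG.mono fun x hx => congrArg (· ^ 2) hx)]
    exact hC G G₁ h hG ((Lp.memLp g).ae_eq hgG) (Lp.memLp h)
  calc ‖g‖ ≤ √(C * ‖h‖ ^ 2) := Real.le_sqrt_of_sq_le hsq
    _ = √C * ‖h‖ := by rw [Real.sqrt_mul' C (sq_nonneg _), Real.sqrt_sq (norm_nonneg h)]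

end Spectrum

/-! ### Words -/

section Words

variable {α : Type*} [Zero α] {m N : ℕ}

lemma perExt_eq_of_modEq (w : Fin m → α) {j : ℤ} {i : Fin m} (h : j ≡ (i : ℕ) [ZMOD m]) :
    perExt w j = w i := by
  rw [perExt, dif_pos i.pos]
  congr
  rw [h.eq, Int.emod_eq_of_lt (by lia) (mod_cast i.isLt), Int.toNat_natCast]

lemma perExt_periodic (w : Fin m → α) : Function.Periodic (perExt w) m := fun j => by
  simp only [perExt, Int.add_emod_right]

lemma exists_modEq_fin [NeZero m] (j : ℤ) : ∃ i : Fin m, j ≡ (i : ℕ) [ZMOD m] := by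
  have hm : (0 : ℤ) < m := by exact_mod_cast NeZero.pos m
  have h0 := Int.emod_nonneg j hm.ne'
  have hlt := Int.emod_lt_of_pos j hm
  refine ⟨⟨(j % m).toNat, by lia⟩, ?_⟩
  rw [Int.toNat_of_nonneg h0]
  exact (Int.mod_modEq j m).symm

/-- The concatenation `w₀ w₁ ⋯` of `N` words of length `m`. -/
def concatWords (w : Fin N → Fin m → α) : Fin (N * m) → α := fun p => w p.divNat p.modNat

lemma perExt_concatWords_add_mul (w : Fin N → Fin m → α) (k : Fin N) (i : Fin m) :
    perExt (concatWords w) ((i : ℕ) + (k : ℕ) * m) = w k i := by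
  rw [perExt_eq_of_modEq _ (i := Fin.mkDivMod k i) ?_, concatWords, Fin.divNat_mkDivMod,
    Fin.modNat_mkDivMod]
  have h : ((Fin.mkDivMod k i : Fin (N * m)) : ℤ) = (i : ℕ) + (k : ℕ) * m := by
    rw [Fin.coe_mkDivMod]
    push_cast
    ring
  rw [h]

lemma dist_perExt_concatWords_lt {X : Type*} [PseudoMetricSpace X] [Zero X] [NeZero m] [NeZero N]
    {x : Fin m → X} {w : Fin N → Fin m → X} {ε : ℝ} (h : ∀ k i, dist (x i) (w k i) < ε) (j : ℤ) :
    dist (perExt x j) (perExt (concatWords w) j) < ε := by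
  obtain ⟨p, hp⟩ := exists_modEq_fin (m := N * m) j
  have hpm : j ≡ (p.modNat : ℕ) [ZMOD m] := by
    refine (hp.of_mul_left N).trans ?_
    rw [Fin.modNat, Int.natCast_mod]
    exact (Int.mod_modEq _ _).symm
  rw [perExt_eq_of_modEq x hpm, perExt_eq_of_modEq _ hp]
  exact h _ _

end Words

section Potentials

variable {c t : ℝ} {m N : ℕ}

lemma floor_div_eq_iff (hc : 0 < c) {j : ℤ} : ⌊t / c⌋ = j ↔ t - j * c ∈ Ico 0 c := by
  rw [Int.floor_eq_iff, le_div_iff₀ hc, div_lt_iff₀ hc, mem_Ico, sub_nonneg, sub_lt_iff_lt_add',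
    add_mul, one_mul]

lemma isL2Loc_aggC (hc : 0 < c) (Y : ℤ → L2I c) : IsL2Loc (aggC c Y) := by
  intro K hK
  obtain ⟨r, hr⟩ := hK.isBounded.subset_closedBall 0
  let piece (j : ℤ) (t : ℝ) : ℝ := (Ico 0 c).indicator (Y j) (t - j * c)
  have hpiece (j : ℤ) : MemLp (piece j) 2 :=
    ((memLp_indicator_iff_restrict measurableSet_Ico).2 (Lp.memLp (Y j))).comp_measurePreserving
      (measurePreserving_sub_right volume (j * c))
  refine ((memLp_finsetSum (Finset.Icc ⌊-r / c⌋ ⌊r / c⌋)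
    fun j _ => hpiece j).restrict K).ae_eq ?_
  filter_upwards [ae_restrict_mem hK.measurableSet] with t ht
  have htr : t ∈ Icc (-r) r := by simpa [Real.closedBall_eq_Icc] using hr ht
  rw [Finset.sum_eq_single ⌊t / c⌋]
  · exact indicator_of_mem ((floor_div_eq_iff hc).1 rfl) _
  · exact fun j _ hj => indicator_of_notMem (fun h => hj ((floor_div_eq_iff hc).2 h).symm) _
  · refine fun hnotMem => absurd (Finset.mem_Icc.2 ⟨?_, ?_⟩) hnotMem <;>
      gcongr
    exacts [htr.1, htr.2]

lemma aggC_add_int_mul (hc : c ≠ 0) (Y : ℤ → L2I c) (t : ℝ) (k : ℤ) :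
    aggC c Y (t + k * c) = aggC c (fun j => Y (j + k)) t := by
  have hfloor : ⌊(t + k * c) / c⌋ = ⌊t / c⌋ + k := by
    rw [add_div, mul_div_cancel_right₀ _ hc, Int.floor_add_intCast]
  rw [aggC, aggC, hfloor]
  congr 1
  push_cast
  ring

lemma aggC_perExt_periodic (hc : c ≠ 0) (w : Fin m → L2I c) :
    Function.Periodic (aggC c (perExt w)) (m * c) := fun t => by
  simpa only [Int.cast_natCast, perExt_periodic w _] using aggC_add_int_mul hc (perExt w) t m

lemma exists_floor_div_eq (hc : 0 < c) (ht : t ∈ Ico 0 (m * c)) :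
    ∃ i : Fin m, ⌊t / c⌋ = (i : ℕ) := by
  have h0 : 0 ≤ ⌊t / c⌋ := Int.floor_nonneg.2 (div_nonneg ht.1 hc.le)
  have hlt : ⌊t / c⌋ < m := Int.floor_lt.2 ((div_lt_iff₀ hc).2 ht.2)
  exact ⟨⟨⌊t / c⌋.toNat, by lia⟩, (Int.toNat_of_nonneg h0).symm⟩

lemma aggC_perExt_concatWords (hc : 0 < c) (w : Fin N → Fin m → L2I c) (k : Fin N)
    (ht : t ∈ Ico 0 (m * c)) :
    aggC c (perExt (concatWords w)) (t + (k : ℕ) * (m * c)) = aggC c (perExt (w k)) t := by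
  obtain ⟨i, hi⟩ := exists_floor_div_eq hc ht
  have hshift := aggC_add_int_mul hc.ne' (perExt (concatWords w)) t ((k : ℕ) * m)
  push_cast at hshift
  rw [← mul_assoc, hshift, aggC, aggC, hi, perExt_concatWords_add_mul,
    perExt_eq_of_modEq (w k) (Int.ModEq.refl _)]

/-- The letter obtained from `χ` by overwriting its values on `[0, δ)` with the constant `κ`. -/
def overwrite (χ : L2I c) (δ κ : ℝ) : L2I c :=
  MemLp.toLp ((Iio δ).piecewise (fun _ => κ) χ)
    (.piecewise measurableSet_Iio (memLp_const κ) ((Lp.memLp χ).restrict _))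

variable {δ : ℝ}

lemma overwrite_ae_eq (χ : L2I c) (δ κ : ℝ) :
    overwrite χ δ κ =ᵐ[volume.restrict (Ico 0 c)] (Iio δ).piecewise (fun _ => κ) χ :=
  MemLp.coeFn_toLp _

lemma eventually_dist_overwrite_lt (χ : L2I c) (K : ℝ) {ε : ℝ} (hε : 0 < ε) :
    ∀ᶠ δ in 𝓝[>] 0, ∀ κ, |κ| ≤ K → dist χ (overwrite χ δ κ) < ε := by
  have hdom : MemLp (fun t => |χ t| + K) 2 (volume.restrict (Ico 0 c)) :=
    (Lp.memLp χ).abs.add (memLp_const K)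
  obtain ⟨δ₀, hδ₀, hsmall⟩ := hdom.eLpNorm_indicator_le (by norm_num) (by norm_num) (half_pos hε)
  filter_upwards [Ioc_mem_nhdsGT hδ₀] with δ hδ κ hκ
  have hvol : volume.restrict (Ico 0 c) (Iio δ) ≤ ENNReal.ofReal δ₀ := by
    rw [Measure.restrict_apply measurableSet_Iio]
    calc volume (Iio δ ∩ Ico 0 c) ≤ volume (Ico 0 δ) := measure_mono fun t ht => ⟨ht.2.1, ht.1⟩
      _ = ENNReal.ofReal δ := by rw [Real.volume_Ico, sub_zero]
      _ ≤ ENNReal.ofReal δ₀ := ENNReal.ofReal_le_ofReal hδ.2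
  have hle : edist χ (overwrite χ δ κ) ≤ ENNReal.ofReal (ε / 2) := by
    rw [Lp.edist_def]
    refine (eLpNorm_mono_ae ?_).trans (hsmall (Iio δ) measurableSet_Iio hvol)
    filter_upwards [overwrite_ae_eq χ δ κ] with t ht
    rw [Pi.sub_apply, ht]
    by_cases htδ : t ∈ Iio δ
    · rw [piecewise_eq_of_mem _ _ _ htδ, indicator_of_mem htδ, Real.norm_eq_abs, Real.norm_eq_abs]
      exact (abs_sub _ _).trans ((add_le_add_right hκ _).trans (le_abs_self _))
    · simp [htδ]
  rw [edist_dist] at hle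
  linarith [(ENNReal.ofReal_le_ofReal_iff (half_pos hε).le).1 hle]

lemma overwrite_mem_concatSet {a b : ℝ} (ha : 0 ≤ a) (hb : 0 ≤ b) {ψ : L2I b} {χ : L2I (a + b)}
    (hχ : χ ∈ concatSet a b ψ) (hδ : δ ≤ a) (κ : ℝ) : overwrite χ δ κ ∈ concatSet a b ψ := by
  obtain ⟨φ, hhead, htail⟩ := hχ
  have hover := overwrite_ae_eq χ δ κ
  refine ⟨overwrite φ δ κ, ?_, ?_⟩
  · filter_upwards [hhead, overwrite_ae_eq φ δ κ, ae_restrict_of_ae_restrict_of_subset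
      (Ico_subset_Ico_right (le_add_of_nonneg_right hb)) hover] with t hχφ hφ hχ
    rw [hχ, hφ]
    by_cases ht : t ∈ Iio δ <;> simp [ht, hχφ]
  · filter_upwards [htail, ae_restrict_mem measurableSet_Ico, ae_restrict_of_ae_restrict_of_subset
      (Ico_subset_Ico_left ha) hover] with t hχψ ht hχ
    rw [hχ, ← hχψ, piecewise_eq_of_notMem _ _ _ (notMem_Iio.2 (hδ.trans ht.1))]

/-- The word obtained from `x` by overwriting the values of its first letter on `[0, δ)` with the
constant `κ`. -/
def overwriteHead [NeZero m] (x : Fin m → L2I c) (δ κ : ℝ) : Fin m → L2I c :=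
  Function.update x 0 (overwrite (x 0) δ κ)

lemma aggC_overwriteHead_ae_eq [NeZero m] (hc : 0 < c) (hδ : δ ≤ c) (κ : ℝ) (x : Fin m → L2I c) :
    aggC c (perExt (overwriteHead x δ κ)) =ᵐ[volume.restrict (Ico 0 (m * c))]
      (Iio δ).piecewise (fun _ => κ) (aggC c (perExt x)) := by
  have hover := (ae_restrict_iff' measurableSet_Ico).1 (overwrite_ae_eq (x 0) δ κ)
  filter_upwards [ae_restrict_of_ae hover, ae_restrict_mem measurableSet_Ico] with t ht htm
  obtain ⟨i, hi⟩ := exists_floor_div_eq hc htm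
  have hagg (w : Fin m → L2I c) : aggC c (perExt w) t = w i (t - (i : ℕ) * c) := by
    rw [aggC, hi, perExt_eq_of_modEq w (Int.ModEq.refl _), Int.cast_natCast]
  have hti := (floor_div_eq_iff hc).1 hi
  rw [hagg, overwriteHead]
  rcases eq_or_ne i 0 with rfl | hi0
  · have hx := hagg x
    simp only [Fin.val_zero, Nat.cast_zero, Int.cast_zero, zero_mul, sub_zero] at hti hx
    rw [Function.update_self, Fin.val_zero, Nat.cast_zero, zero_mul, sub_zero, ht hti]
    simp only [Set.piecewise, hx]
  · have hi1 : (1 : ℝ) ≤ (i : ℕ) := by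
      exact_mod_cast Nat.one_le_iff_ne_zero.2 (Fin.val_ne_zero_iff.2 hi0)
    have hδt : δ ≤ t := by
      have := hti.1
      rw [Int.cast_natCast, sub_nonneg] at this
      nlinarith
    rw [Function.update_of_ne hi0, piecewise_eq_of_notMem _ _ _ (notMem_Iio.2 hδt), hagg]

end Potentials

section Blocks

open scoped Matrix.Norms.Operator

variable {c δ E : ℝ} {m N : ℕ} {P R : Matrix (Fin 2) (Fin 2) ℝ}

lemma isPropagator_overwriteHead [NeZero m] (hδ : 0 < δ) (hδc : δ ≤ c) {x : Fin m → L2I c}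
    (hR : IsPropagator (schrodingerMatrix fun t => aggC c (perExt x) t - E) δ (m * c) R) {ω : ℝ}
    (hω : ω ≠ 0) :
    IsPropagator (schrodingerMatrix fun t => aggC c (perExt (overwriteHead x δ (E - ω ^ 2))) t - E)
      0 (m * c) (R * freeTransferMatrix δ ω) := by
  have hc : 0 < c := hδ.trans_le hδc
  have hδm : δ ≤ m * c := hδc.trans (le_mul_of_one_le_left hc.le (mod_cast NeZero.one_le))
  have hae := aggC_overwriteHead_ae_eq hc hδc (E - ω ^ 2) x
  refine ((isPropagator_freeTransferMatrix δ hω).congr ?_).trans (hR.congr ?_) hδ.le hδm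
  · rw [uIoc_of_le hδ.le, ← restrict_Ioo_eq_restrict_Ioc]
    filter_upwards [ae_restrict_mem measurableSet_Ioo, ae_restrict_of_ae_restrict_of_subset
      (Ioo_subset_Ico_self.trans (Ico_subset_Ico_right hδm)) hae] with t ht heq
    rw [schrodingerMatrix, schrodingerMatrix, heq, piecewise_eq_of_mem _ _ _ (mem_Iio.2 ht.2),
      sub_sub_cancel_left]
  · rw [uIoc_of_le hδm, ← restrict_Ioo_eq_restrict_Ioc]
    filter_upwards [ae_restrict_mem measurableSet_Ioo, ae_restrict_of_ae_restrict_of_subset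
      (Ioo_subset_Ico_self.trans (Ico_subset_Ico_left hδ.le)) hae] with t ht heq
    rw [schrodingerMatrix, schrodingerMatrix, heq,
      piecewise_eq_of_notMem _ _ _ (notMem_Iio.2 ht.1.le)]

lemma isPropagator_concatWords_block (hc : 0 < c) {w : Fin N → Fin m → L2I c} (k : Fin N)
    (hP : IsPropagator (schrodingerMatrix fun t => aggC c (perExt (w k)) t - E) 0 (m * c) P) :
    IsPropagator (fun t => schrodingerMatrix (fun t => aggC c (perExt (concatWords w)) t - E)
      (t + (k : ℕ) * (m * c))) 0 (m * c) P := by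
  refine hP.congr ?_
  rw [uIoc_of_le (by positivity), ← restrict_Ioo_eq_restrict_Ioc]
  filter_upwards [ae_restrict_mem measurableSet_Ioo] with t ht
  rw [schrodingerMatrix, schrodingerMatrix,
    aggC_perExt_concatWords hc w k (Ioo_subset_Ico_self ht)]

lemma isPropagator_concatWords_snoc (hc : 0 < c) {n : ℕ} {u v : Fin m → L2I c}
    (hP : IsPropagator (schrodingerMatrix fun t => aggC c (perExt u) t - E) 0 (m * c) P)
    (hR : IsPropagator (schrodingerMatrix fun t => aggC c (perExt v) t - E) 0 (m * c) R) :
    IsPropagator (schrodingerMatrix fun t =>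
        aggC c (perExt (concatWords (Fin.snoc (fun _ : Fin n => u) v : Fin (n + 1) → _))) t - E)
      0 (((n + 1) * m : ℕ) * c) (R * P ^ n) := by
  have hpow := IsPropagator.pow (by positivity) n fun k hk =>
    isPropagator_concatWords_block hc (w := Fin.snoc (fun _ : Fin n => u) v)
      (Fin.castSucc ⟨k, hk⟩) (by simpa only [Fin.snoc_castSucc] using hP)
  have hlast := (isPropagator_concatWords_block hc (w := Fin.snoc (fun _ : Fin n => u) v)
    (Fin.last n) (by simpa only [Fin.snoc_last] using hR)).of_comp_add_right
  rw [zero_add, Fin.val_last] at hlast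
  convert! hpow.trans hlast (by positivity) (le_add_of_nonneg_left (by positivity)) using 1
  push_cast
  ring

end Blocks

theorem gapRichC_of_overwrite_mem {a c : ℝ} (ha : 0 < a) (hac : a ≤ c) {W : Set (L2I c)}
    (hW : ∀ χ ∈ W, ∀ δ ≤ a, ∀ κ : ℝ, overwrite χ δ κ ∈ W) : GapRichC c W (∅ : Set ℝ) := by
  refine ⟨fun x => by simp [AccPt, Filter.neBot_iff], fun E _ m hm x hx ε hε => ?_⟩
  have : NeZero m := ⟨hm.ne'⟩
  have hc : 0 < c := ha.trans_le hac
  obtain ⟨δ, hclose, hδ, hδa⟩ := ((eventually_dist_overwrite_lt (x 0) (|E| + 4) hε).and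
    (Ioc_mem_nhdsGT ha)).exists
  have hδm : δ ≤ m * c :=
    (hδa.trans hac).trans (le_mul_of_one_le_left hc.le (mod_cast NeZero.one_le))
  obtain ⟨R, hR⟩ := exists_isPropagator_schrodingerMatrix hδm
    (((isL2Loc_aggC hc (perExt x)).sub_const E).intervalIntegrable δ (m * c))
  obtain ⟨ω, hω, ω', hω', n, hyp⟩ := exists_isHyperbolic_mul_freeTransferMatrix (S := Icc 1 2)
    hδ.ne' hR.det_eq_one isPreconnected_Icc (by norm_num) (by rw [interior_Icc]; norm_num)
  set u : ℝ → Fin m → L2I c := fun ω => overwriteHead x δ (E - ω ^ 2)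
  set w : Fin (n + 1) → Fin m → L2I c := Fin.snoc (fun _ => u ω) (u ω')
  have hprop {ω : ℝ} (hω : ω ∈ Icc (1 : ℝ) 2) := isPropagator_overwriteHead hδ (hδa.trans hac) hR
    (ω := ω) (by linarith [hω.1])
  have hu {ω : ℝ} (hω : ω ∈ Icc (1 : ℝ) 2) : ∀ i, u ω i ∈ W ∧ dist (x i) (u ω i) < ε := by
    refine (Function.forall_update_iff x fun i χ => χ ∈ W ∧ dist (x i) χ < ε).2
      ⟨⟨hW _ (hx 0) δ hδa _, hclose _ ?_⟩, fun i _ => ⟨hx i, by rwa [dist_self]⟩⟩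
    refine (abs_sub _ _).trans (add_le_add_right ?_ _)
    rw [abs_of_nonneg (sq_nonneg ω)]
    nlinarith [hω.1, hω.2]
  have hw : ∀ k i, w k i ∈ W ∧ dist (x i) (w k i) < ε :=
    Fin.lastCases (by simpa only [w, Fin.snoc_last] using hu hω')
      fun k => by simpa only [w, Fin.snoc_castSucc] using hu hω
  have hspec := notMem_contSpectrum_of_isHyperbolic (by positivity) (isL2Loc_aggC hc _)
    (aggC_perExt_periodic hc.ne' (concatWords w))
    (isPropagator_concatWords_snoc hc (hprop hω) (hprop hω')) hyp
  refine ⟨(n + 1) * m, by positivity, concatWords w, fun p => (hw _ _).1,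
    dist_perExt_concatWords_lt fun k i => (hw k i).2, hspec⟩

/-- Fix `a, b > 0` and `ψ ∈ L²([0,b))`. The set
`{φ♯ψ : φ ∈ L²([0,a))} ⊆ L²([0,a+b))` is gap-rich with empty exceptional set. -/
theorem concat_fixed_tail_gapRich (a b : ℝ) (ha : 0 < a) (hb : 0 < b) (ψ : L2I b) :
    GapRichC (a + b) (concatSet a b ψ) (∅ : Set ℝ) :=
  gapRichC_of_overwrite_mem ha (by linarith) fun _ hχ _ hδ κ =>
    overwrite_mem_concatSet ha.le hb.le hχ hδ κ
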